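/- arXiv:1009.3777 — 4 statements merged into one kernel-verified Lean document; each statement's English description precedes it below -/
import Mathlib

section
/- Let F be a field of characteristic zero, V a finite-dimensional F-vector space, N a nilpotent endomorphism of V, and w an integer. There exists a unique ascending filtration W = (W_i)_{i∈ℤ} on V such that (1) N(W_i) ⊆ W_{i−2} for all i ∈ ℤ, and (2) for every integer α > 0, the map Gr^W_{w+α} V → Gr^W_{w−α} V induced by N^α is an isomorphism. -/
/-- `W` is an ascending filtration on `V`, exhaustive and separated, which is the weight
filtration centered at `w` associated to the nilpotent endomorphism `N`: it satisfies
`N (W i) ⊆ W (i - 2)` and for every `α > 0` the map `Gr_{w+α} V → Gr_{w-α} V` induced by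
`N ^ α` is an isomorphism (expressed by surjectivity and injectivity of the induced map
on subquotients). -/
def IsWeightFiltration {F V : Type*} [Field F] [AddCommGroup V] [Module F V]
    (N : V →ₗ[F] V) (w : ℤ) (W : ℤ → Submodule F V) : Prop :=
  Monotone W ∧
  (∃ a : ℤ, ∀ i ≤ a, W i = ⊥) ∧
  (∃ b : ℤ, ∀ i, b ≤ i → W i = ⊤) ∧
  (∀ i : ℤ, (W i).map N ≤ W (i - 2)) ∧
  (∀ α : ℤ, 0 < α →
    W (w - α) ≤ W (w - α - 1) ⊔ (W (w + α)).map (N ^ α.toNat) ∧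
    ∀ v ∈ W (w + α), (N ^ α.toNat) v ∈ W (w - α - 1) → v ∈ W (w + α - 1))

/-- Candidate for the weight filtration centered at `0`. -/
def monoFil {F V : Type*} [Field F] [AddCommGroup V] [Module F V]
    (N : V →ₗ[F] V) (k : ℤ) : Submodule F V :=
  ⨆ i : ℕ, (LinearMap.ker (N ^ (2 * (i : ℤ) + k + 1).toNat)).map (N ^ i)

section MonoFil
variable {F V : Type*} [Field F] [AddCommGroup V] [Module F V] (N : V →ₗ[F] V)

lemma ker_pow_mono_aux {a b : ℕ} (h : a ≤ b) :
    LinearMap.ker (N ^ a) ≤ LinearMap.ker (N ^ b) := by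
  intro v hv
  rw [LinearMap.mem_ker] at hv ⊢
  obtain ⟨c, rfl⟩ := Nat.exists_eq_add_of_le' h
  rw [pow_add, Module.End.mul_apply, hv, map_zero]

lemma monoFil_mono : Monotone (monoFil N) := by
  intro a b h
  refine iSup_mono fun i => Submodule.map_mono (ker_pow_mono_aux N ?_)
  omega

lemma monoFil_map (k : ℤ) : (monoFil N k).map N ≤ monoFil N (k - 2) := by
  unfold monoFil
  rw [Submodule.map_iSup]
  refine iSup_le fun i => ?_
  refine le_trans ?_ (le_iSup _ (i + 1))
  rw [← Submodule.map_comp, pow_succ' N i, Module.End.mul_eq_comp]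
  refine Submodule.map_mono (ker_pow_mono_aux N ?_)
  push_cast
  omega

lemma monoFil_map_pow (n : ℕ) (k : ℤ) :
    (monoFil N k).map (N ^ n) ≤ monoFil N (k - 2 * n) := by
  induction n with
  | zero => simp [Module.End.one_eq_id]
  | succ n ih =>
    rw [pow_succ' N n, Module.End.mul_eq_comp, Submodule.map_comp]
    refine (Submodule.map_mono ih).trans ((monoFil_map N _).trans (monoFil_mono N ?_))
    push_cast
    omega

lemma ker_le_monoFil (a : ℕ) (k : ℤ) (h : (a : ℤ) ≤ k + 1) :
    LinearMap.ker (N ^ a) ≤ monoFil N k := by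
  refine le_trans ?_ (le_iSup _ 0)
  rw [pow_zero, Module.End.one_eq_id, Submodule.map_id]
  refine ker_pow_mono_aux N ?_
  push_cast
  omega

lemma monoFil_neg (a : ℕ) : monoFil N (-a) ≤ (monoFil N a).map (N ^ a) := by
  refine iSup_le fun i => ?_
  by_cases h : a ≤ i
  · obtain ⟨j, rfl⟩ := Nat.exists_eq_add_of_le h
    rw [pow_add N a j, Module.End.mul_eq_comp, Submodule.map_comp]
    refine Submodule.map_mono (le_trans ?_ (le_iSup _ j))
    refine Submodule.map_mono (ker_pow_mono_aux N ?_)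
    push_cast
    omega
  · rintro _ ⟨v, hv, rfl⟩
    have := ker_pow_mono_aux N (b := i) (by omega) hv
    rw [LinearMap.mem_ker] at this
    rw [this]
    exact zero_mem _

end MonoFil

lemma monoFil_isWeight {F V : Type*} [Field F] [AddCommGroup V] [Module F V]
    (N : V →ₗ[F] V) (hN : IsNilpotent N) (w : ℤ) :
    IsWeightFiltration N w (fun i => monoFil N (i - w)) := by
  obtain ⟨n, hn⟩ := hN
  refine ⟨fun a b h => monoFil_mono N (by omega), ⟨w - 2 * n - 2, fun i hi => ?_⟩,
    ⟨w + n, fun i hi => ?_⟩, fun i => ?_, fun α hα => ?_⟩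
  · rw [eq_bot_iff]
    refine iSup_le fun j => ?_
    by_cases h : n ≤ j
    · rw [pow_eq_zero_of_le h hn]
      simp
    · have : (2 * (j : ℤ) + (i - w) + 1).toNat = 0 := by omega
      rw [this, pow_zero, Module.End.one_eq_id, LinearMap.ker_id]
      simp
  · rw [eq_top_iff]
    refine le_trans ?_ (ker_le_monoFil N n _ (by omega))
    simp [hn]
  · exact (monoFil_map N _).trans (monoFil_mono N (by omega))
  · lift α to ℕ using hα.le
    simp only [Int.toNat_natCast]
    constructor
    · refine le_sup_of_le_right ?_
      have := monoFil_neg N α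
      rwa [show w - (α : ℤ) - w = -α by ring, show w + (α : ℤ) - w = α by ring]
    · intro v _ hv
      rw [show w - (α : ℤ) - 1 - w = -((α + 1 : ℕ) : ℤ) by push_cast; ring] at hv
      obtain ⟨u, hu, huv⟩ := monoFil_neg N (α + 1) hv
      have h1 : N u ∈ monoFil N (w + (α : ℤ) - 1 - w) :=
        monoFil_mono N (by push_cast; omega) (monoFil_map N _ (Submodule.mem_map_of_mem hu))
      have h2 : v - N u ∈ LinearMap.ker (N ^ α) := by
        rw [LinearMap.mem_ker, map_sub, ← huv, pow_succ, Module.End.mul_apply, sub_self]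
      have h3 := ker_le_monoFil N α (w + (α : ℤ) - 1 - w) (by omega) h2
      have := add_mem h3 h1
      rwa [sub_add_cancel] at this

lemma weight_eq {F V : Type*} [Field F] [AddCommGroup V] [Module F V]
    (N : V →ₗ[F] V) (hN : IsNilpotent N) (w : ℤ)
    (W : ℤ → Submodule F V) (hW : IsWeightFiltration N w W) (k : ℤ) :
    W (w + k) = monoFil N k := by
  obtain ⟨hmono, ⟨a, ha⟩, ⟨b, hb⟩, hmap, hiso⟩ := hW
  obtain ⟨n, hn⟩ := hN
  have hpow : ∀ (m : ℕ) (i : ℤ), (W i).map (N ^ m) ≤ W (i - 2 * m) := by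
    intro m i
    induction m with
    | zero => simp [Module.End.one_eq_id]
    | succ m ih =>
      rw [pow_succ' N m, Module.End.mul_eq_comp, Submodule.map_comp]
      refine (Submodule.map_mono ih).trans ((hmap _).trans (hmono ?_))
      push_cast
      omega
  -- kernels are contained in the filtration
  have hker : ∀ (m j : ℕ), b - w ≤ j + m → LinearMap.ker (N ^ (j + 1)) ≤ W (w + j) := by
    intro m
    induction m with
    | zero => intro j hj; rw [hb _ (by push_cast at hj; omega)]; exact le_top
    | succ m ih =>
      intro j hj v hv
      have h1 := ih (j + 1) (by push_cast at hj ⊢; omega)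
        (ker_pow_mono_aux N (Nat.le_succ _) hv)
      have h2 := (hiso ((j + 1 : ℕ) : ℤ) (by positivity)).2 v h1 (by
        rw [Int.toNat_natCast, LinearMap.mem_ker.1 hv]; exact zero_mem _)
      exact hmono (by push_cast; omega) h2
  have hker' : ∀ j : ℕ, LinearMap.ker (N ^ (j + 1)) ≤ W (w + j) := fun j =>
    hker (b - w).toNat j (by omega)
  have hge : ∀ k, monoFil N k ≤ W (w + k) := by
    intro k
    refine iSup_le fun i => ?_
    rcases h : (2 * (i : ℤ) + k + 1).toNat with _ | j
    · rw [pow_zero, Module.End.one_eq_id, LinearMap.ker_id]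
      simp
    · refine (Submodule.map_mono (hker' j)).trans ((hpow i _).trans (hmono ?_))
      omega
  have hneg : ∀ γ : ℕ, 1 ≤ γ → (∀ β : ℕ, γ ≤ β → W (w + β) ≤ monoFil N β) →
      ∀ (m β : ℕ), γ ≤ β → w - a ≤ β + m → W (w - β) ≤ (monoFil N γ).map (N ^ γ) := by
    intro γ hγ hP m
    induction m with
    | zero => intro β _ hβ; rw [ha _ (by push_cast at hβ; omega)]; exact bot_le
    | succ m ih =>
      intro β hβ hm
      refine (hiso β (by omega)).1.trans (sup_le ?_ ?_)
      · refine (hmono ?_).trans (ih (β + 1) (by omega) (by push_cast at hm ⊢; omega))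
        push_cast
        omega
      · rw [Int.toNat_natCast]
        refine (Submodule.map_mono (hP β hβ)).trans ?_
        obtain ⟨c, rfl⟩ := Nat.exists_eq_add_of_le hβ
        rw [pow_add N γ c, Module.End.mul_eq_comp, Submodule.map_comp]
        refine Submodule.map_mono ((monoFil_map_pow N _ _).trans (monoFil_mono N ?_))
        push_cast
        omega
  have hneg' : ∀ γ : ℕ, 1 ≤ γ → (∀ β : ℕ, γ ≤ β → W (w + β) ≤ monoFil N β) →
      W (w - γ) ≤ (monoFil N γ).map (N ^ γ) := fun γ hγ hP =>
    hneg γ hγ hP (w - a).toNat γ le_rfl (by omega)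
  have hpos : ∀ (m α : ℕ), n ≤ α + m → W (w + α) ≤ monoFil N α := by
    intro m
    induction m with
    | zero =>
      intro α hα
      refine le_trans ?_ (ker_le_monoFil N n _ (by omega))
      simp [hn]
    | succ m ih =>
      intro α hα v hv
      have h1 := hneg' (α + 2) (by omega) (fun β hβ => ih β (by omega))
      have h2 : (N ^ (α + 1)) v ∈ W (w - (α + 2 : ℕ)) :=
        hmono (by push_cast; omega) (hpow (α + 1) _ (Submodule.mem_map_of_mem hv))
      obtain ⟨u, hu, huv⟩ := h1 h2
      have h3 : N u ∈ monoFil N α :=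
        monoFil_mono N (by push_cast; omega) (monoFil_map N _ (Submodule.mem_map_of_mem hu))
      have h4 : v - N u ∈ LinearMap.ker (N ^ (α + 1)) := by
        rw [LinearMap.mem_ker, map_sub, ← huv, pow_succ N (α + 1), Module.End.mul_apply, sub_self]
      have := add_mem (ker_le_monoFil N (α + 1) α (by push_cast; omega) h4) h3
      rwa [sub_add_cancel] at this
  refine le_antisymm ?_ (hge k)
  obtain ⟨m, rfl | rfl⟩ := Int.eq_nat_or_neg k
  · exact hpos n m (by omega)
  · rcases Nat.eq_zero_or_pos m with rfl | hm
    · simpa using hpos n 0 (by omega)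
    · have := hneg' m hm (fun β _ => hpos n β (by omega))
      rw [← sub_eq_add_neg]
      exact this.trans ((monoFil_map_pow N m m).trans (monoFil_mono N (by omega)))

/-- Existence and uniqueness of the weight filtration centered at `w` associated to a
nilpotent endomorphism of a finite dimensional vector space over a field of
characteristic zero. -/
theorem weightFiltration_existsUnique
    (F V : Type*) [Field F] [CharZero F] [AddCommGroup V] [Module F V]
    [FiniteDimensional F V] (N : V →ₗ[F] V) (hN : IsNilpotent N) (w : ℤ) :
    ∃! W : ℤ → Submodule F V, IsWeightFiltration N w W := by
  refine ⟨fun i => monoFil N (i - w), monoFil_isWeight N hN w, fun W hW => ?_⟩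
  funext i
  have := weight_eq N hN w W hW (i - w)
  rwa [add_sub_cancel] at this
end

section
/- Let F be a field of characteristic zero, let V and V′ be finite-dimensional F-vector spaces with nilpotent endomorphisms N and N′, and let W, W′ be the weight filtrations on V, V′ centered at integers w, w′ associated to N, N′. Then the weight filtration on V ⊗ V′ centered at w + w′ associated to the nilpotent operator N ⊗ id + id ⊗ N′ is the tensor product filtration W ⊗ W′, defined by (W ⊗ W′)_i = Σ_{i₁+i₂=i} W_{i₁} ⊗ W′_{i₂} (the span in V ⊗ V′ of the images of the subspaces W_{i₁} ⊗ W′_{i₂}). -/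
open TensorProduct

theorem IsWeightFiltration.pow_mem {F V : Type*} [Field F] [AddCommGroup V] [Module F V]
    {N : V →ₗ[F] V} {w : ℤ} {W : ℤ → Submodule F V} (h : IsWeightFiltration N w W)
    (n : ℕ) {i : ℤ} {v : V} (hv : v ∈ W i) : (N ^ n) v ∈ W (i - 2 * n) := by
  induction n with
  | zero => simpa using hv
  | succ n ih =>
    rw [pow_succ', Module.End.mul_apply]
    have := h.2.2.2.1 _ (Submodule.mem_map_of_mem (f := N) ih)
    convert this using 2
    push_cast; ring

theorem IsWeightFiltration.unique {F V : Type*} [Field F] [AddCommGroup V] [Module F V]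
    {N : V →ₗ[F] V} {w : ℤ} {W U : ℤ → Submodule F V} (h : IsWeightFiltration N w W)
    (h' : IsWeightFiltration N w U) : W = U := by
  obtain ⟨a, ha⟩ := h.2.1
  obtain ⟨b, hb⟩ := h.2.2.1
  obtain ⟨a', ha'⟩ := h'.2.1
  obtain ⟨b', hb'⟩ := h'.2.2.1
  have key : ∀ {W U : ℤ → Submodule F V}, IsWeightFiltration N w W → IsWeightFiltration N w U →
      ∀ l : ℤ, 0 < l → W (w + l) = U (w + l) → W (w - l - 1) = U (w - l - 1) →
      W (w + l - 1) ≤ U (w + l - 1) ∧ W (w - l) ≤ U (w - l) := by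
    intro W U h h' l hl e1 e2
    have hl2 : (l.toNat : ℤ) = l := Int.toNat_of_nonneg hl.le
    constructor
    · intro v hv
      have hv1 : v ∈ U (w + l) := by
        rw [← e1]; exact h.1 (by omega) hv
      refine (h'.2.2.2.2 l hl).2 v hv1 ?_
      rw [← e2]
      have := h.pow_mem l.toNat hv
      rw [hl2] at this
      exact h.1 (by omega) this
    · refine (h.2.2.2.2 l hl).1.trans (sup_le ?_ ?_)
      · rw [e2]; exact h'.1 (by omega)
      · rw [e1]
        rintro _ ⟨v, hv, rfl⟩
        have := h'.pow_mem l.toNat hv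
        rw [hl2] at this
        exact h'.1 (by omega) this
  have main : ∀ n : ℕ, ∀ l : ℤ, 0 ≤ l → max (max (b - w) (b' - w)) (max (w - a) (w - a')) ≤ l + n →
      (∀ i, w + l ≤ i → W i = U i) ∧ (∀ i, i ≤ w - l - 1 → W i = U i) := by
    intro n
    induction n with
    | zero =>
      intro l hl hm
      simp only [Nat.cast_zero, add_zero, max_le_iff] at hm
      constructor
      · intro i hi
        rw [hb i (by omega), hb' i (by omega)]
      · intro i hi
        rw [ha i (by omega), ha' i (by omega)]
    | succ n ih =>
      intro l hl hm
      obtain ⟨h1, h2⟩ := ih (l + 1) (by omega) (by push_cast at hm; omega)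
      have e1 := h1 (w + (l + 1)) le_rfl
      have e2 := h2 (w - (l + 1) - 1) le_rfl
      have k1 := key h h' (l + 1) (by omega) e1 e2
      have k2 := key h' h (l + 1) (by omega) e1.symm e2.symm
      have j1 := le_antisymm k1.1 k2.1
      have j2 := le_antisymm k1.2 k2.2
      constructor
      · intro i hi
        rcases eq_or_lt_of_le hi with rfl | hi
        · convert j1 using 2 <;> ring
        · exact h1 i (by omega)
      · intro i hi
        rcases eq_or_lt_of_le hi with rfl | hi
        · convert j2 using 2 <;> ring
        · exact h2 i (by omega)
  obtain ⟨h1, h2⟩ := main (max (max (b - w) (b' - w)) (max (w - a) (w - a'))).toNat 0 le_rfl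
    (by rw [zero_add]; exact Int.self_le_toNat _)
  funext i
  rcases le_or_gt (w + 0) i with hi | hi
  · exact h1 i hi
  · exact h2 i (by omega)

/-- An `sl₂`-triple with a basis of eigenvectors with integral eigenvalues. -/
structure WTriple {F V ι : Type*} [Field F] [AddCommGroup V] [Module F V]
    (b : Module.Basis ι F V) (h : ι → ℤ) (N X H : V →ₗ[F] V) : Prop where
  hH : ∀ s, H (b s) = (h s : F) • b s
  hXN : ∀ v, X (N v) = N (X v) + H v
  hHN : ∀ v, H (N v) + N v + N v = N (H v)
  hHX : ∀ v, H (X v) = X (H v) + X v + X v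

namespace WTriple
variable {F V ι : Type*} [Field F] [AddCommGroup V] [Module F V]
    {b : Module.Basis ι F V} {h : ι → ℤ} {N X H : V →ₗ[F] V}

theorem swap (T : WTriple b h N X H) : WTriple b (fun s => - h s) X N (-H) where
  hH s := by simp [T.hH]
  hXN v := by simp [T.hXN]
  hHN v := by simp [T.hHX]
  hHX v := by
    simp only [LinearMap.neg_apply, map_neg, ← T.hHN]
    abel

theorem repr_H (T : WTriple b h N X H) (v : V) (s : ι) :
    b.repr (H v) s = (h s : F) * b.repr v s := by
  have : (b.coord s) ∘ₗ H = (h s : F) • b.coord s := by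
    classical
    refine b.ext fun t => ?_
    simp only [LinearMap.comp_apply, T.hH, map_smul, LinearMap.smul_apply, smul_eq_mul,
      Module.Basis.coord_apply, Module.Basis.repr_self]
    by_cases hst : t = s
    · subst hst; rfl
    · simp [hst]
  exact LinearMap.congr_fun this v

theorem H_pow (T : WTriple b h N X H) {v : V} {c : F} (hv : H v = c • v) (n : ℕ) :
    H ((N ^ n) v) = (c - 2 * n) • (N ^ n) v := by
  induction n with
  | zero => simp [hv]
  | succ n ih =>
    rw [pow_succ', Module.End.mul_apply]
    have := T.hHN ((N ^ n) v)
    rw [ih, map_smul] at this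
    rw [add_assoc] at this
    rw [eq_sub_of_add_eq this]
    push_cast
    module

theorem X_pow (T : WTriple b h N X H) {v : V} {c : F} (hv : H v = c • v) (n : ℕ) :
    X ((N ^ (n + 1)) v) = (N ^ (n + 1)) (X v) + ((n + 1) * (c - n)) • (N ^ n) v := by
  induction n with
  | zero => simp [T.hXN, hv]
  | succ n ih =>
    rw [pow_succ' N (n + 1), Module.End.mul_apply, Module.End.mul_apply, T.hXN, ih,
      T.H_pow hv, map_add, map_smul, ← Module.End.mul_apply N (N ^ n), ← pow_succ']
    push_cast
    module

theorem eq_of_eigen [CharZero F] (T : WTriple b h N X H) {v : V} {c : ℤ}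
    (hv : H v = (c : F) • v) {s : ι} (hs : b.repr v s ≠ 0) : h s = c := by
  have := T.repr_H v s
  rw [hv, map_smul, Finsupp.smul_apply, smul_eq_mul] at this
  exact_mod_cast (mul_right_cancel₀ hs this).symm

theorem inj [CharZero F] [Finite ι] (T : WTriple b h N X H) (α : ℕ) (v : V)
    (hv : H v = (α : F) • v) (hN : (N ^ α) v = 0) : v = 0 := by
  obtain ⟨B, hB⟩ := (Set.finite_range h).bddAbove
  have main : ∀ n : ℕ, ∀ α : ℕ, B < α + n → ∀ v, H v = (α : F) • v → (N ^ α) v = 0 → v = 0 := by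
    intro n
    induction n with
    | zero =>
      intro α hα v hv _
      by_contra hne
      have : b.repr v ≠ 0 := by simpa using hne
      obtain ⟨s, hs⟩ := Finsupp.ne_iff.mp this
      have h1 := T.eq_of_eigen (c := α) (by simpa using hv) hs
      have h2 := hB ⟨s, rfl⟩
      push_cast at hα
      omega
    | succ n ih =>
      intro α hα v hv hN
      have hX : X v = 0 := by
        refine ih (α + 2) (by push_cast at hα ⊢; omega) _ ?_ ?_
        · rw [T.hHX, hv, map_smul]
          push_cast
          module
        · have := T.X_pow hv (α + 1)
          have h0 : (N ^ (α + 1)) v = 0 := by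
            rw [pow_succ', Module.End.mul_apply, hN, map_zero]
          have h0' : (N ^ (α + 1 + 1)) v = 0 := by
            rw [pow_succ', Module.End.mul_apply, h0, map_zero]
          rw [h0, h0', map_zero, smul_zero, add_zero] at this
          exact this.symm
      have desc : ∀ m : ℕ, m ≤ α → (N ^ m) v = 0 → v = 0 := by
        intro m
        induction m with
        | zero => intro _ h0; simpa using h0
        | succ m ihm =>
          intro hm h0
          refine ihm (by omega) ?_
          have := T.X_pow hv m
          rw [h0, hX, map_zero, map_zero, zero_add] at this
          refine (smul_eq_zero.mp this.symm).resolve_left ?_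
          refine mul_ne_zero (by exact_mod_cast Nat.succ_ne_zero m) ?_
          rw [sub_ne_zero]
          exact_mod_cast (by omega : α ≠ m)
      exact desc α le_rfl hN
  refine main (B.toNat + 1) α ?_ v hv hN
  have := Int.self_le_toNat B
  push_cast
  omega

theorem finrank_le [CharZero F] [Finite ι] [FiniteDimensional F V]
    (T : WTriple b h N X H) (α : ℕ) :
    (Module.End.eigenspace H (α : F)).map (N ^ α) ≤ Module.End.eigenspace H (-(α : F)) ∧
    Module.finrank F ((Module.End.eigenspace H (α : F)).map (N ^ α)) =
      Module.finrank F (Module.End.eigenspace H (α : F)) := by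
  constructor
  · rintro _ ⟨v, hv, rfl⟩
    have hv : H v = (α : F) • v := Module.End.mem_eigenspace_iff.mp hv
    rw [Module.End.mem_eigenspace_iff, T.H_pow hv]
    congr 1; ring
  · rw [← LinearMap.range_domRestrict]
    apply LinearMap.finrank_range_of_inj
    rw [← LinearMap.ker_eq_bot, LinearMap.ker_eq_bot']
    rintro ⟨v, hv⟩ h0
    have := T.inj α v (Module.End.mem_eigenspace_iff.mp hv) h0
    simpa using this

theorem map_eq [CharZero F] [Finite ι] [FiniteDimensional F V]
    (T : WTriple b h N X H) (α : ℕ) :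
    (Module.End.eigenspace H (α : F)).map (N ^ α) = Module.End.eigenspace H (-(α : F)) := by
  have h1 := T.finrank_le α
  have h2 := T.swap.finrank_le α
  have e : ∀ c : F, Module.End.eigenspace (-H) c = Module.End.eigenspace H (-c) := by
    intro c
    ext v
    rw [Module.End.mem_eigenspace_iff, Module.End.mem_eigenspace_iff, LinearMap.neg_apply,
      neg_eq_iff_eq_neg, neg_smul]
  rw [e, e, neg_neg] at h2
  refine Submodule.eq_of_le_of_finrank_le h1.1 ?_
  rw [h1.2, ← h2.2]
  exact Submodule.finrank_mono h2.1

/-- The filtration by eigenvalues. -/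
def filt (b : Module.Basis ι F V) (h : ι → ℤ) (w i : ℤ) : Submodule F V :=
  Submodule.span F (b '' {s | h s + w ≤ i})

theorem mem_filt {w i : ℤ} {v : V} :
    v ∈ filt b h w i ↔ ∀ s, b.repr v s ≠ 0 → h s + w ≤ i := by
  rw [filt, Module.Basis.mem_span_image]
  simp [Set.subset_def]

theorem eigen_mem [CharZero F] (T : WTriple b h N X H) {v : V} {c : ℤ} (w i : ℤ)
    (hv : H v = (c : F) • v) (hi : c + w ≤ i) : v ∈ filt b h w i := by
  rw [mem_filt]
  intro s hs
  rw [T.eq_of_eigen hv hs]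
  exact hi

theorem split (T : WTriple b h N X H) {w i : ℤ} {v : V} (hv : v ∈ filt b h w i) :
    ∃ v0 v1, H v0 = ((i - w : ℤ) : F) • v0 ∧ v1 ∈ filt b h w (i - 1) ∧ v0 + v1 = v := by
  have hs : {s | h s + w ≤ i} = {s | h s + w = i} ∪ {s | h s + w ≤ i - 1} := by
    ext s; simp only [Set.mem_ofPred_eq, Set.mem_union]; omega
  rw [filt, hs, Set.image_union, Submodule.span_union, Submodule.mem_sup] at hv
  obtain ⟨v0, h0, v1, h1, e⟩ := hv
  refine ⟨v0, v1, ?_, h1, e⟩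
  rw [← Module.End.mem_eigenspace_iff]
  refine (Submodule.span_le.mpr ?_) h0
  rintro _ ⟨s, hs, rfl⟩
  rw [SetLike.mem_coe, Module.End.mem_eigenspace_iff, T.hH]
  congr 2
  have : h s + w = i := hs
  omega

theorem isWeightFiltration [CharZero F] [Finite ι] [FiniteDimensional F V]
    (T : WTriple b h N X H) (w : ℤ) : IsWeightFiltration N w (filt b h w) := by
  have hmono : Monotone (filt b h w) := by
    intro i j hij v hv
    rw [mem_filt] at hv ⊢
    exact fun s hs => (hv s hs).trans hij
  have hshift : ∀ i : ℤ, (filt b h w i).map N ≤ filt b h w (i - 2) := by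
    intro i
    rw [filt, Submodule.map_span, Submodule.span_le]
    rintro _ ⟨_, ⟨s, hs, rfl⟩, rfl⟩
    have hs : h s + w ≤ i := hs
    have := T.H_pow (T.hH s) 1
    refine T.eigen_mem (c := h s - 2) w _ ?_ (by omega)
    simpa using this
  have hpow : ∀ (n : ℕ) (i : ℤ) (v : V), v ∈ filt b h w i → (N ^ n) v ∈ filt b h w (i - 2 * n) := by
    intro n i v hv
    induction n with
    | zero => simpa using hv
    | succ n ih =>
      rw [pow_succ', Module.End.mul_apply]
      have := hshift _ (Submodule.mem_map_of_mem (f := N) ih)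
      convert this using 2
      push_cast; ring
  refine ⟨hmono, ?_, ?_, hshift, ?_⟩
  · obtain ⟨B, hB⟩ := (Set.finite_range h).bddBelow
    refine ⟨B + w - 1, fun i hi => ?_⟩
    rw [eq_bot_iff]
    intro v hv
    rw [mem_filt] at hv
    rw [Submodule.mem_bot]
    by_contra hne
    have : b.repr v ≠ 0 := by simpa using hne
    obtain ⟨s, hs⟩ := Finsupp.ne_iff.mp this
    have h1 := hv s hs
    have h2 := hB ⟨s, rfl⟩
    omega
  · obtain ⟨B, hB⟩ := (Set.finite_range h).bddAbove
    refine ⟨B + w, fun i hi => ?_⟩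
    rw [eq_top_iff]
    intro v _
    rw [mem_filt]
    intro s _
    have h2 := hB ⟨s, rfl⟩
    omega
  · intro α hα
    obtain ⟨n, rfl⟩ : ∃ n : ℕ, α = n := ⟨α.toNat, by omega⟩
    rw [Int.toNat_natCast]
    constructor
    · intro v hv
      obtain ⟨v0, v1, h0, h1, rfl⟩ := T.split hv
      rw [add_comm v0 v1]
      refine Submodule.add_mem_sup h1 ?_
      have h0' : v0 ∈ Module.End.eigenspace H (-(n : F)) := by
        rw [Module.End.mem_eigenspace_iff, h0]
        congr 1
        push_cast; ring
      rw [← T.map_eq n] at h0'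
      obtain ⟨u, hu, rfl⟩ := h0'
      refine Submodule.mem_map_of_mem ?_
      exact T.eigen_mem (c := n) w _ (by simpa using Module.End.mem_eigenspace_iff.mp hu)
        (by omega)
    · intro v hv hNv
      obtain ⟨v0, v1, h0, h1, rfl⟩ := T.split hv
      have h0' : H v0 = (n : F) • v0 := by
        rw [h0]; congr 1; push_cast; ring
      have hz : (N ^ n) v0 = 0 := by
        have hl : (N ^ n) v0 ∈ filt b h w (w - n - 1) := by
          have h3 := hmono (by omega) (hpow n _ _ h1) (b := w - n - 1)
          rw [map_add] at hNv
          simpa using Submodule.sub_mem _ hNv h3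
        have he : H ((N ^ n) v0) = ((-n : ℤ) : F) • (N ^ n) v0 := by
          rw [T.H_pow h0']; congr 1; push_cast; ring
        by_contra hne
        have : b.repr ((N ^ n) v0) ≠ 0 := by simpa using hne
        obtain ⟨s, hs⟩ := Finsupp.ne_iff.mp this
        have := T.eq_of_eigen he hs
        have := mem_filt.mp hl s hs
        omega
      rw [T.inj n v0 h0' hz, zero_add]
      exact h1

theorem tensor {V' ι' : Type*} [AddCommGroup V'] [Module F V']
    {b' : Module.Basis ι' F V'} {h' : ι' → ℤ} {N' X' H' : V' →ₗ[F] V'}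
    (T : WTriple b h N X H) (T' : WTriple b' h' N' X' H') :
    WTriple (b.tensorProduct b') (fun p => h p.1 + h' p.2)
      (TensorProduct.map N LinearMap.id + TensorProduct.map LinearMap.id N')
      (TensorProduct.map X LinearMap.id + TensorProduct.map LinearMap.id X')
      (TensorProduct.map H LinearMap.id + TensorProduct.map LinearMap.id H') where
  hH := by
    rintro ⟨s, t⟩
    simp [T.hH, T'.hH, Module.Basis.tensorProduct_apply, add_smul, TensorProduct.smul_tmul']
  hXN v := by
    induction v using TensorProduct.induction_on with
    | zero => simp
    | tmul x y =>
      simp [T.hXN, T'.hXN, TensorProduct.add_tmul, TensorProduct.tmul_add]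
      abel
    | add x y hx hy => rw [map_add, map_add, hx, hy]; simp only [map_add]; abel
  hHN v := by
    induction v using TensorProduct.induction_on with
    | zero => simp
    | tmul x y =>
      simp [← T.hHN, ← T'.hHN, TensorProduct.add_tmul, TensorProduct.tmul_add]
      abel
    | add x y hx hy => simp only [map_add] at hx hy ⊢; rw [← hx, ← hy]; abel
  hHX v := by
    induction v using TensorProduct.induction_on with
    | zero => simp
    | tmul x y =>
      simp [T.hHX, T'.hHX, TensorProduct.add_tmul, TensorProduct.tmul_add]
      abel
    | add x y hx hy => simp only [map_add] at hx hy ⊢; rw [hx, hy]; abel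

theorem filt_tensor {V' ι' : Type*} [AddCommGroup V'] [Module F V']
    (b : Module.Basis ι F V) (h : ι → ℤ)
    (b' : Module.Basis ι' F V') (h' : ι' → ℤ) (w w' i : ℤ) :
    ⨆ j : ℤ, Submodule.map₂ (TensorProduct.mk F V V') (filt b h w j) (filt b' h' w' (i - j)) =
      filt (b.tensorProduct b') (fun p => h p.1 + h' p.2) (w + w') i := by
  apply le_antisymm
  · refine iSup_le fun j => ?_
    rw [filt, filt, Submodule.map₂_span_span, Submodule.span_le]
    rintro _ ⟨_, ⟨s, hs, rfl⟩, _, ⟨t, ht, rfl⟩, rfl⟩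
    refine Submodule.subset_span ⟨(s, t), ?_, ?_⟩
    · simp only [Set.mem_ofPred_eq] at hs ht ⊢
      omega
    · simp [Module.Basis.tensorProduct_apply]
  · rw [filt, Submodule.span_le]
    rintro _ ⟨⟨s, t⟩, hst, rfl⟩
    simp only [Set.mem_ofPred_eq] at hst
    rw [Module.Basis.tensorProduct_apply]
    refine Submodule.mem_iSup_of_mem (h s + w) ?_
    refine Submodule.apply_mem_map₂ (TensorProduct.mk F V V') ?_ ?_
    · exact Submodule.subset_span ⟨s, by simp, rfl⟩
    · refine Submodule.subset_span ⟨t, ?_, rfl⟩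
      simp only [Set.mem_ofPred_eq]
      omega

end WTriple

section
open Polynomial DirectSum

theorem quot_basis (F : Type*) [Field F] (k : ℕ) :
    ∃ c : Module.Basis (Fin k) F (F[X] ⧸ F[X] ∙ (X ^ k : F[X])),
      ∀ j : Fin k, c j = Submodule.Quotient.mk (X ^ (j : ℕ)) := by
  have hm : (X ^ k : F[X]).Monic := monic_X_pow k
  let c := (AdjoinRoot.powerBasis' hm).basis
  have hd : (AdjoinRoot.powerBasis' hm).dim = k := by simp
  refine ⟨c.reindex (finCongr hd), fun j => ?_⟩
  refine (Module.Basis.reindex_apply c (finCongr hd) j).trans ?_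
  have := (AdjoinRoot.powerBasis' hm).basis_eq_pow ((finCongr hd).symm j)
  refine this.trans ?_
  simp only [AdjoinRoot.powerBasis'_gen, finCongr_symm, finCongr_apply, Fin.val_cast]
  rw [← AdjoinRoot.mk_X, ← map_pow]
  rfl

theorem jordan_basis {F V : Type*} [Field F] [AddCommGroup V] [Module F V]
    [FiniteDimensional F V] (N : V →ₗ[F] V) (hN : IsNilpotent N) :
    ∃ (d : ℕ) (k : Fin d → ℕ) (b : Module.Basis (Σ i, Fin (k i)) F V),
      ∀ (i : Fin d) (j : Fin (k i)), N (b ⟨i, j⟩) =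
        if h : (j : ℕ) + 1 < k i then b ⟨i, ⟨j + 1, h⟩⟩ else 0 := by
  classical
  obtain ⟨n, hn⟩ := hN
  have ht : Module.IsTorsion' (Module.AEval' N) (Submonoid.powers (X : F[X])) := by
    rw [Submodule.isTorsion'_powers_iff]
    intro x
    refine ⟨n, ?_⟩
    obtain ⟨v, rfl⟩ := (Module.AEval'.of N).surjective x
    rw [Module.AEval'.X_pow_smul_of, hn]
    simp
  obtain ⟨d, k, ⟨e⟩⟩ := Module.torsion_by_prime_power_decomposition
    (irreducible_X (R := F)) ht
  refine ⟨d, k, ?_⟩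
  choose c hc using fun i => quot_basis F (k i)
  let e1 : (⨁ i : Fin d, F[X] ⧸ F[X] ∙ (X : F[X]) ^ (k i)) ≃ₗ[F[X]]
    (∀ i : Fin d, F[X] ⧸ F[X] ∙ (X : F[X]) ^ (k i)) := DirectSum.linearEquivFunOnFintype _ _ _
  let E : V ≃ₗ[F] (∀ i : Fin d, F[X] ⧸ F[X] ∙ (X : F[X]) ^ (k i)) :=
    (Module.AEval'.of N).trans ((e.trans e1).restrictScalars F)
  have hE : ∀ v, E (N v) = (X : F[X]) • E v := by
    intro v
    change (e.trans e1) (Module.AEval'.of N (N v)) = (X : F[X]) • (e.trans e1) (Module.AEval'.of N v)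
    rw [← Module.AEval'.X_smul_of, map_smul]
  refine ⟨(Pi.basis c).map E.symm, fun i j => ?_⟩
  apply E.injective
  rw [hE]
  simp only [Module.Basis.map_apply, LinearEquiv.apply_symm_apply, Pi.basis_apply]
  have hX : (X : F[X]) • c i j = if h : (j : ℕ) + 1 < k i then c i ⟨j + 1, h⟩ else 0 := by
    rw [hc, ← Submodule.Quotient.mk_smul, smul_eq_mul, ← pow_succ']
    split_ifs with h
    · rw [hc]
    · rw [Submodule.Quotient.mk_eq_zero, Submodule.mem_span_singleton]
      have : (j : ℕ) + 1 = k i := by have := j.2; omega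
      exact ⟨1, by rw [this]; simp⟩
  rw [← Pi.single_smul, hX]
  split_ifs with h <;> simp
end

theorem exists_wTriple {F V : Type*} [Field F] [AddCommGroup V] [Module F V]
    [FiniteDimensional F V] (N : V →ₗ[F] V) (hN : IsNilpotent N) :
    ∃ (d : ℕ) (k : Fin d → ℕ) (b : Module.Basis (Σ i, Fin (k i)) F V)
      (h : (Σ i, Fin (k i)) → ℤ) (X H : V →ₗ[F] V), WTriple b h N X H := by
  obtain ⟨d, k, b, hb⟩ := jordan_basis N hN
  let h : (Σ i, Fin (k i)) → ℤ := fun p => (k p.1 : ℤ) - 1 - 2 * (p.2 : ℕ)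
  let X : V →ₗ[F] V := b.constr F fun p =>
    (((p.2 : ℕ) : F) * ((k p.1 : F) - ((p.2 : ℕ) : F))) •
      b ⟨p.1, ⟨(p.2 : ℕ) - 1, lt_of_le_of_lt (Nat.sub_le _ _) p.2.2⟩⟩
  let H : V →ₗ[F] V := b.constr F fun p => (h p : F) • b p
  have hH : ∀ s, H (b s) = (h s : F) • b s := fun s => b.constr_basis F _ s
  have hX0 : ∀ (i : Fin d) (hj : 0 < k i), X (b ⟨i, ⟨0, hj⟩⟩) = 0 := by
    intro i hj
    refine (b.constr_basis F _ _).trans ?_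
    simp
  have hX1 : ∀ (i : Fin d) (j : ℕ) (hj : j + 1 < k i), X (b ⟨i, ⟨j + 1, hj⟩⟩) =
      (((j : F) + 1) * ((k i : F) - ((j : F) + 1))) • b ⟨i, ⟨j, by omega⟩⟩ := by
    intro i j hj
    refine (b.constr_basis F _ _).trans ?_
    simp
  have hN1 : ∀ (i : Fin d) (j : ℕ) (hj : j + 1 < k i), N (b ⟨i, ⟨j, by omega⟩⟩) =
      b ⟨i, ⟨j + 1, hj⟩⟩ := by
    intro i j hj
    rw [hb, dif_pos hj]
  have hN0 : ∀ (i : Fin d) (j : ℕ) (hj : j < k i) (_ : ¬ j + 1 < k i), N (b ⟨i, ⟨j, hj⟩⟩) = 0 := by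
    intro i j hj hj'
    rw [hb, dif_neg hj']
  refine ⟨d, k, b, h, X, H, hH, ?_, ?_, ?_⟩
  · refine LinearMap.congr_fun (f := X ∘ₗ N) (g := N ∘ₗ X + H) (b.ext ?_)
    rintro ⟨i, ⟨j, hj⟩⟩
    simp only [LinearMap.comp_apply, LinearMap.add_apply, hH, h]
    have e1 : X (N (b ⟨i, ⟨j, hj⟩⟩)) =
        (((j : F) + 1) * ((k i : F) - ((j : F) + 1))) • b ⟨i, ⟨j, hj⟩⟩ := by
      by_cases hj' : j + 1 < k i
      · rw [hN1 i j hj', hX1]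
      · rw [hN0 i j hj hj', map_zero]
        have : (k i : F) = (j : F) + 1 := by
          have h1 : k i = j + 1 := by omega
          simp [h1]
        rw [this]; simp
    have e2 : N (X (b ⟨i, ⟨j, hj⟩⟩)) =
        ((j : F) * ((k i : F) - (j : F))) • b ⟨i, ⟨j, hj⟩⟩ := by
      cases j with
      | zero => rw [hX0]; simp
      | succ j =>
        rw [hX1, map_smul, hN1 i j hj]
        push_cast; rfl
    rw [e1, e2]
    push_cast
    module
  · refine LinearMap.congr_fun (f := H ∘ₗ N + N + N) (g := N ∘ₗ H) (b.ext ?_)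
    rintro ⟨i, ⟨j, hj⟩⟩
    simp only [LinearMap.comp_apply, LinearMap.add_apply, hH, map_smul]
    by_cases hj' : j + 1 < k i
    · rw [hN1 i j hj', hH]
      simp only [h]
      push_cast
      module
    · rw [hN0 i j hj hj']; simp
  · refine LinearMap.congr_fun (f := H ∘ₗ X) (g := X ∘ₗ H + X + X) (b.ext ?_)
    rintro ⟨i, ⟨j, hj⟩⟩
    simp only [LinearMap.comp_apply, LinearMap.add_apply, hH, map_smul]
    cases j with
    | zero => rw [hX0]; simp
    | succ j =>
      rw [hX1, map_smul, hH]
      simp only [h]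
      push_cast
      module

/-- Let `W`, `W'` be the weight filtrations centered at `w`, `w'` associated to nilpotent
endomorphisms `N`, `N'` of finite dimensional vector spaces `V`, `V'` over a field of
characteristic zero. Then the weight filtration on `V ⊗ V'` centered at `w + w'`
associated to the nilpotent operator `N ⊗ id + id ⊗ N'` is the tensor product filtration
`(W ⊗ W')_i = Σ_{i₁ + i₂ = i} W_{i₁} ⊗ W'_{i₂}`. -/
theorem weightFiltration_tensor
    (F V V' : Type*) [Field F] [CharZero F]
    [AddCommGroup V] [Module F V] [FiniteDimensional F V]
    [AddCommGroup V'] [Module F V'] [FiniteDimensional F V']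
    (N : V →ₗ[F] V) (hN : IsNilpotent N) (w : ℤ) (W : ℤ → Submodule F V)
    (hW : IsWeightFiltration N w W)
    (N' : V' →ₗ[F] V') (hN' : IsNilpotent N') (w' : ℤ) (W' : ℤ → Submodule F V')
    (hW' : IsWeightFiltration N' w' W') :
    IsWeightFiltration
      (TensorProduct.map N LinearMap.id + TensorProduct.map LinearMap.id N')
      (w + w')
      (fun i : ℤ =>
        ⨆ j : ℤ, Submodule.map₂ (TensorProduct.mk F V V') (W j) (W' (i - j))) := by
  obtain ⟨d, k, b, h, X, H, T⟩ := exists_wTriple N hN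
  obtain ⟨d', k', b', h', X', H', T'⟩ := exists_wTriple N' hN'
  rw [hW.unique (T.isWeightFiltration w), hW'.unique (T'.isWeightFiltration w')]
  have key := (T.tensor T').isWeightFiltration (w + w')
  have e := funext fun i => WTriple.filt_tensor b h b' h' w w' i
  exact e.symm ▸ key
end

section
/- Let F be a field of characteristic zero, V a finite-dimensional F-vector space, N a nilpotent endomorphism of V, and W the weight filtration centered at w ∈ ℤ associated to N. For every integer j > 0, let N^{(∧j)} be the unique endomorphism of ∧^j V satisfying N^{(∧j)}(v₁ ∧ ⋯ ∧ v_j) = Σ_{k=1}^{j} v₁ ∧ ⋯ ∧ N(v_k) ∧ ⋯ ∧ v_j. Then N^{(∧j)} is nilpotent and the weight filtration on ∧^j V centered at w·j associated to N^{(∧j)} is the exterior power filtration ∧^j W, defined by (∧^j W)_i = Σ_{i₁+⋯+i_j=i} W_{i₁} ∧ ⋯ ∧ W_{i_j} (the span of wedges v₁ ∧ ⋯ ∧ v_j with v_k ∈ W_{i_k}). -/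
/-- The wedge `v₁ ∧ ⋯ ∧ v_j`, as an element of the `j`-th exterior power `⋀[F]^j V`. -/
def wedge (F : Type*) {V : Type*} [Field F] [AddCommGroup V] [Module F V] (j : ℕ)
    (v : Fin j → V) : ⋀[F]^j V :=
  ⟨ExteriorAlgebra.ιMulti F j v, ExteriorAlgebra.ιMulti_range F j (Set.mem_range_self v)⟩

/-- The exterior power filtration `∧^j W` on `⋀[F]^j V` associated to a filtration `W` on
`V`: `(∧^j W)_i` is the span of the wedges `v₁ ∧ ⋯ ∧ v_j` with `v_k ∈ W_{i_k}` and
`i₁ + ⋯ + i_j = i`. -/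
def extPowerFiltration (F : Type*) {V : Type*} [Field F] [AddCommGroup V] [Module F V]
    (j : ℕ) (W : ℤ → Submodule F V) (i : ℤ) : Submodule F (⋀[F]^j V) :=
  ⨆ c : {c : Fin j → ℤ // ∑ k, c k = i},
    Submodule.span F
      {x : ⋀[F]^j V | ∃ v : Fin j → V, (∀ k, v k ∈ W (c.1 k)) ∧ wedge F j v = x}


namespace WF

/-- An `sl₂`-triple of endomorphisms, in pointwise form. -/
structure Trip {F M : Type*} [Field F] [AddCommGroup M] [Module F M]
    (X Y H : M →ₗ[F] M) : Prop where
  xy : ∀ v, X (Y v) = Y (X v) + H v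
  hx : ∀ v, H (X v) = X (H v) + (2 : F) • X v
  hy : ∀ v, H (Y v) = Y (H v) - (2 : F) • Y v

section sl2

variable {F M : Type*} [Field F] [AddCommGroup M] [Module F M] {X Y H : M →ₗ[F] M}

/-- The integral eigenspaces. -/
def eig (H : M →ₗ[F] M) (m : ℤ) : Submodule F M := Module.End.eigenspace H (m : F)

theorem mem_eig {H : M →ₗ[F] M} {m : ℤ} {v : M} : v ∈ eig H m ↔ H v = (m : F) • v :=
  Module.End.mem_eigenspace_iff

theorem eig_indep [CharZero F] (H : M →ₗ[F] M) : iSupIndep (eig H) :=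
  (Module.End.eigenspaces_iSupIndep H).comp Int.cast_injective

theorem Trip.symm (h : Trip X Y H) : Trip Y X (-H) where
  xy v := by simp [h.xy]
  hx v := by simp [h.hy]; abel
  hy v := by simp [h.hx]; abel

theorem Trip.x_mem (h : Trip X Y H) {m : ℤ} {v : M} (hv : v ∈ eig H m) :
    X v ∈ eig H (m + 2) := by
  rw [mem_eig] at *
  rw [h.hx, hv, map_smul, ← add_smul]; push_cast; rfl

theorem Trip.y_mem (h : Trip X Y H) {m : ℤ} {v : M} (hv : v ∈ eig H m) :
    Y v ∈ eig H (m - 2) := by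
  rw [mem_eig] at *
  rw [h.hy, hv, map_smul, ← sub_smul]; push_cast; rfl

theorem Trip.xpow_mem (h : Trip X Y H) {m : ℤ} {v : M} (hv : v ∈ eig H m) (k : ℕ) :
    (X ^ k) v ∈ eig H (m + 2 * k) := by
  induction k with
  | zero => simpa using hv
  | succ k ih =>
    rw [pow_succ', Module.End.mul_apply]
    convert h.x_mem ih using 2
    push_cast; ring

theorem Trip.ypow_mem (h : Trip X Y H) {m : ℤ} {v : M} (hv : v ∈ eig H m) (k : ℕ) :
    (Y ^ k) v ∈ eig H (m - 2 * k) := by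
  induction k with
  | zero => simpa using hv
  | succ k ih =>
    rw [pow_succ', Module.End.mul_apply]
    convert h.y_mem ih using 2
    push_cast; ring

theorem Trip.comm (h : Trip X Y H) {m : ℤ} {v : M} (hv : v ∈ eig H m) (k : ℕ) :
    X ((Y ^ (k + 1)) v) = (Y ^ (k + 1)) (X v) + (((k + 1) * (m - k) : ℤ) : F) • (Y ^ k) v := by
  induction k with
  | zero => simp [h.xy, mem_eig.1 hv]
  | succ k ih =>
    rw [pow_succ' Y (k + 1), Module.End.mul_apply, h.xy, ih, mem_eig.1 (h.ypow_mem hv (k + 1))]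
    rw [Module.End.mul_apply, map_add, map_smul, ← Module.End.mul_apply Y (Y ^ k), ← pow_succ' Y k,
      add_assoc, ← add_smul]
    congr 2
    push_cast; ring

theorem eig_finite [CharZero F] [FiniteDimensional F M] (H : M →ₗ[F] M) :
    {m : ℤ | eig H m ≠ ⊥}.Finite :=
  (Module.End.finite_hasEigenvalue H).preimage Int.cast_injective.injOn

theorem eig_bound [CharZero F] [FiniteDimensional F M] (H : M →ₗ[F] M) :
    ∃ b : ℤ, ∀ m, b < |m| → eig H m = ⊥ := by
  obtain ⟨b, hb⟩ := ((eig_finite H).image abs).bddAbove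
  refine ⟨b, fun m hm => ?_⟩
  by_contra hne
  exact absurd (hb ⟨m, hne, rfl⟩) (not_le.2 hm)

theorem Trip.x_nil [CharZero F] [FiniteDimensional F M] (h : Trip X Y H) {m : ℤ} {v : M}
    (hv : v ∈ eig H m) : ∃ n : ℕ, (X ^ n) v = 0 := by
  obtain ⟨b, hb⟩ := eig_bound H
  refine ⟨(|b| + |m| + 1).toNat, ?_⟩
  have h1 := h.xpow_mem hv (|b| + |m| + 1).toNat
  rw [hb] at h1
  · simpa using h1
  · have := neg_abs_le m
    have := le_abs_self b
    have := abs_nonneg m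
    have := abs_nonneg b
    rw [Int.toNat_of_nonneg (by positivity)]
    exact lt_of_lt_of_le (by linarith) (le_abs_self _)

theorem Trip.inj_aux [CharZero F] (h : Trip X Y H) (n : ℕ) : ∀ (m : ℤ) (v : M),
    v ∈ eig H m → (X ^ n) v = 0 → ∀ k : ℕ, (k : ℤ) ≤ m → (Y ^ k) v = 0 → v = 0 := by
  induction n with
  | zero => intro m v _ h0 _ _ _; simpa using h0
  | succ n ih =>
    intro m v hv hX k
    induction k with
    | zero => intro _ h0; simpa using h0
    | succ k ihk =>
      intro hk hY
      have hXv : X v = 0 := by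
        refine ih (m + 2) (X v) (h.x_mem hv) ?_ (k + 2) (by push_cast at *; linarith) ?_
        · rwa [pow_succ, Module.End.mul_apply] at hX
        · have := h.comm hv (k + 1)
          rw [pow_succ' Y (k + 1), Module.End.mul_apply, hY] at this
          rw [pow_succ' Y (k + 1), Module.End.mul_apply]
          simpa using this.symm
      have h2 := h.comm hv k
      rw [hY, hXv, map_zero, map_zero, zero_add] at h2
      refine ihk (by push_cast at *; linarith) ?_
      refine (smul_eq_zero.1 h2.symm).resolve_left ?_
      rw [Int.cast_eq_zero]
      push_cast at hk
      have : (0 : ℤ) < (k + 1) * (m - k) := mul_pos (by positivity) (by linarith)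
      exact this.ne'

theorem Trip.inj [CharZero F] [FiniteDimensional F M] (h : Trip X Y H) {k : ℕ} {v : M}
    (hv : v ∈ eig H k) (hY : (Y ^ k) v = 0) : v = 0 := by
  obtain ⟨n, hn⟩ := h.x_nil hv
  exact h.inj_aux n k v hv hn k le_rfl hY

theorem eig_neg (H : M →ₗ[F] M) (m : ℤ) : eig (-H) m = eig H (-m) := by
  ext v
  rw [mem_eig, mem_eig, LinearMap.neg_apply, neg_eq_iff_eq_neg]
  simp

theorem Trip.surj [CharZero F] [FiniteDimensional F M] (h : Trip X Y H) (k : ℕ) :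
    eig H (-k) ≤ (eig H k).map (Y ^ k) := by
  have hY : ∀ v ∈ eig H k, (Y ^ k) v ∈ eig H (-k) := fun v hv => by
    convert h.ypow_mem hv k using 2; ring
  have hX : ∀ v ∈ eig H (-k), (X ^ k) v ∈ eig H k := fun v hv => by
    convert h.xpow_mem hv k using 2; ring
  let f := (Y ^ k).restrict hY
  let g := (X ^ k).restrict hX
  have hf : Function.Injective f := by
    rw [← LinearMap.ker_eq_bot, LinearMap.ker_eq_bot']
    rintro ⟨v, hv⟩ h0
    have := congrArg Subtype.val h0
    exact Subtype.ext (h.inj hv this)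
  have hg : Function.Injective g := by
    rw [← LinearMap.ker_eq_bot, LinearMap.ker_eq_bot']
    rintro ⟨v, hv⟩ h0
    have := congrArg Subtype.val h0
    exact Subtype.ext (h.symm.inj (by rwa [eig_neg]) this)
  have hs := (LinearMap.injective_iff_surjective_of_finrank_eq_finrank
    (le_antisymm (LinearMap.finrank_le_finrank_of_injective hf)
      (LinearMap.finrank_le_finrank_of_injective hg))).1 hf
  intro v hv
  obtain ⟨u, hu⟩ := hs ⟨v, hv⟩
  exact ⟨u, u.2, congrArg Subtype.val hu⟩

/-- The filtration attached to the grading. -/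
def filt (H : M →ₗ[F] M) (c i : ℤ) : Submodule F M := ⨆ m : ℤ, ⨆ _ : m ≤ i, eig H (m - c)

theorem eig_le_filt (H : M →ₗ[F] M) {c i m : ℤ} (h : m ≤ i) : eig H (m - c) ≤ filt H c i :=
  le_iSup₂_of_le m h le_rfl

theorem filt_mono (H : M →ₗ[F] M) (c : ℤ) : Monotone (filt H c) := fun _ _ hij =>
  iSup₂_le fun _ hm => eig_le_filt H (hm.trans hij)

theorem Trip.filt_map (h : Trip X Y H) (c i : ℤ) : (filt H c i).map Y ≤ filt H c (i - 2) := by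
  rw [Submodule.map_le_iff_le_comap]
  refine iSup₂_le fun m hm v hv => ?_
  refine eig_le_filt H (sub_le_sub_right hm 2) ?_
  convert h.y_mem hv using 2
  ring

theorem Trip.filt_pow (h : Trip X Y H) (c i : ℤ) (k : ℕ) {v : M} (hv : v ∈ filt H c i) :
    (Y ^ k) v ∈ filt H c (i - 2 * k) := by
  induction k with
  | zero => simpa using hv
  | succ k ih =>
    rw [pow_succ', Module.End.mul_apply]
    convert h.filt_map c _ ⟨_, ih, rfl⟩ using 2
    push_cast; ring

theorem Trip.weight [CharZero F] [FiniteDimensional F M] (h : Trip X Y H)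
    (htop : ⨆ m, eig H m = ⊤) (c : ℤ) : IsWeightFiltration Y c (filt H c) := by
  obtain ⟨b, hb⟩ := eig_bound H
  refine ⟨filt_mono H c, ⟨c - b - 1, fun i hi => ?_⟩, ⟨c + b, fun i hi => ?_⟩,
    h.filt_map c, fun α hα => ?_⟩
  · rw [eq_bot_iff]
    refine iSup₂_le fun m hm => (hb _ ?_).le
    exact lt_of_lt_of_le (by linarith) (neg_le_abs _)
  · rw [eq_top_iff, ← htop]
    refine iSup_le fun m => ?_
    by_cases hm : b < |m|
    · rw [hb m hm]; exact bot_le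
    · have := eig_le_filt H (c := c) (i := i) (m := m + c)
        (by have := le_abs_self m; linarith)
      simpa using this
  · lift α to ℕ using hα.le
    rw [Int.toNat_natCast]
    constructor
    · refine iSup₂_le fun m hm => ?_
      rcases hm.lt_or_eq with hm | rfl
      · exact le_sup_of_le_left (eig_le_filt H (by linarith))
      · refine le_sup_of_le_right ?_
        rw [show c - (α : ℤ) - c = -α by ring]
        refine (h.surj α).trans (Submodule.map_mono ?_)
        have := eig_le_filt H (c := c) (le_refl (c + α))
        simpa using this
    · intro v hv hYv
      have hle : filt H c (c + α) ≤ filt H c (c + α - 1) ⊔ eig H α := by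
        refine iSup₂_le fun m hm => ?_
        rcases hm.lt_or_eq with hm | rfl
        · exact le_sup_of_le_left (eig_le_filt H (by linarith))
        · refine le_sup_of_le_right (le_of_eq ?_)
          congr 1; ring
      obtain ⟨x, hx, y, hy, rfl⟩ := Submodule.mem_sup.1 (hle hv)
      have h1 : (Y ^ α) y ∈ filt H c (c - α - 1) := by
        have h2 := h.filt_pow c _ α hx
        rw [show c + (α : ℤ) - 1 - 2 * α = c - α - 1 by ring] at h2
        have := Submodule.sub_mem _ hYv h2
        simpa using this
      have h3 : (Y ^ α) y ∈ eig H (-α) := by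
        convert h.ypow_mem hy α using 2; ring
      have h4 : filt H c (c - α - 1) ≤ ⨆ m, ⨆ _ : m ≠ -(α : ℤ), eig H m :=
        iSup₂_le fun m hm => le_iSup₂_of_le (m - c) (by intro h; linarith) le_rfl
      have h5 := Submodule.disjoint_def.1 (eig_indep H (-(α : ℤ))) _ h3 (h4 h1)
      rw [h.inj hy h5, add_zero]
      exact hx

theorem eig_eq_of_le [CharZero F] (H : M →ₗ[F] M) (G : ℤ → Submodule F M)
    (hG : ∀ m, G m ≤ eig H m) (htop : ⨆ m, G m = ⊤) (m : ℤ) : G m = eig H m := by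
  refine le_antisymm (hG m) fun x hx => ?_
  have hle : (⊤ : Submodule F M) ≤ G m ⊔ ⨆ n, ⨆ _ : n ≠ m, eig H n := by
    rw [← htop]
    refine iSup_le fun n => ?_
    by_cases hn : n = m
    · subst hn; exact le_sup_left
    · exact le_sup_of_le_right (le_iSup₂_of_le n hn (hG n))
  obtain ⟨y, hy, z, hz, rfl⟩ := Submodule.mem_sup.1 (hle (Submodule.mem_top (x := x)))
  have hz' : z ∈ eig H m := by simpa using Submodule.sub_mem _ hx (hG m hy)
  have := Submodule.disjoint_def.1 (eig_indep H m) _ hz' hz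
  rw [this, add_zero]; exact hy

end sl2


section uniq

variable {F V : Type*} [Field F] [AddCommGroup V] [Module F V] {N : V →ₗ[F] V} {w : ℤ}
  {W : ℤ → Submodule F V}

/-- The explicit formula for the weight filtration. -/
def expl (N : V →ₗ[F] V) (w k : ℤ) : Submodule F V :=
  ⨆ l : ℕ, ⨆ m : ℕ, ⨆ _ : (m : ℤ) = k - w + 2 * l, (LinearMap.ker (N ^ (m + 1))).map (N ^ l)

theorem mem_expl {k : ℤ} (l m : ℕ) (h : (m : ℤ) = k - w + 2 * l) {v : V}
    (hv : (N ^ (m + 1)) v = 0) : (N ^ l) v ∈ expl N w k := by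
  have : (LinearMap.ker (N ^ (m + 1))).map (N ^ l) ≤ expl N w k :=
    le_iSup_of_le l (le_iSup_of_le m (le_iSup_of_le h le_rfl))
  exact this ⟨v, hv, rfl⟩

theorem expl_pow (k k' : ℤ) (a : ℕ) (h : k' = k - 2 * a) {v : V} (hv : v ∈ expl N w k) :
    (N ^ a) v ∈ expl N w k' := by
  suffices expl N w k ≤ (expl N w k').comap (N ^ a) from this hv
  refine iSup_le fun l => iSup_le fun m => iSup_le fun hm => ?_
  rintro _ ⟨u, hu, rfl⟩
  rw [Submodule.mem_comap, ← Module.End.mul_apply, ← pow_add]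
  refine mem_expl (a + l) m ?_ hu
  push_cast; linarith

theorem wt_pow (hW : IsWeightFiltration N w W) (i : ℤ) (k : ℕ) {v : V} (hv : v ∈ W i) :
    (N ^ k) v ∈ W (i - 2 * k) := by
  induction k with
  | zero => simpa using hv
  | succ k ih =>
    rw [pow_succ', Module.End.mul_apply]
    convert hW.2.2.2.1 _ ⟨_, ih, rfl⟩ using 2
    push_cast; ring

theorem wt_ker (hW : IsWeightFiltration N w W) (m : ℕ) {v : V} (hv : (N ^ (m + 1)) v = 0) :
    v ∈ W (w + m) := by
  have key : ∀ d : ℕ, v ∈ W (w + m + d) → v ∈ W (w + m) := by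
    intro d
    induction d with
    | zero => simp
    | succ d ih =>
      intro h
      apply ih
      have h1 := (hW.2.2.2.2 (m + d + 1) (by positivity)).2 v
        (by convert h using 2; push_cast; ring) (by
          rw [show ((m : ℤ) + d + 1).toNat = d + (m + 1) by omega, pow_add,
            Module.End.mul_apply, hv, map_zero]
          exact Submodule.zero_mem _)
      convert h1 using 2; ring
  obtain ⟨b, hb⟩ := hW.2.2.1
  apply key (b - (w + m)).toNat
  rw [hb _ (by omega)]
  trivial

theorem wt_surj (hW : IsWeightFiltration N w W) (α : ℕ) {v : V} (hv : v ∈ W (w - α)) :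
    ∃ u ∈ W (w + α), (N ^ α) u = v := by
  obtain ⟨a, ha⟩ := hW.2.1
  have key : ∀ d α : ℕ, W (w - (α + d : ℕ)) = ⊥ → ∀ v ∈ W (w - α),
      ∃ u ∈ W (w + α), (N ^ α) u = v := by
    intro d
    induction d with
    | zero =>
      intro α h v hv
      rw [add_zero] at h
      rw [h] at hv
      exact ⟨0, Submodule.zero_mem _, by rw [map_zero]; exact ((Submodule.mem_bot F).1 hv).symm⟩
    | succ d ih =>
      intro α h v hv
      rcases Nat.eq_zero_or_pos α with rfl | hα
      · exact ⟨v, by simpa using hv, by simp⟩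
      have h1 := (hW.2.2.2.2 α (by exact_mod_cast hα)).1 hv
      obtain ⟨x, hx, _, ⟨u, hu, rfl⟩, rfl⟩ := Submodule.mem_sup.1 h1
      obtain ⟨y, hy, rfl⟩ := ih (α + 1) (by rw [← h]; congr 2; push_cast; ring) x
        (by convert hx using 2; push_cast; ring)
      refine ⟨N y + u, Submodule.add_mem _ ?_ hu, ?_⟩
      · refine hW.1 ?_ (hW.2.2.2.1 _ ⟨y, hy, rfl⟩)
        push_cast; linarith
      · rw [map_add, pow_succ, Module.End.mul_apply, Int.toNat_natCast]
  exact key (w - a).toNat α (ha _ (by push_cast; omega)) v hv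

theorem wt_eq (hN : IsNilpotent N) (hW : IsWeightFiltration N w W) (k : ℤ) :
    W k = expl N w k := by
  obtain ⟨n, hn⟩ := hN
  apply le_antisymm
  · have key : ∀ d k : ℕ, n ≤ k + d + 1 → ∀ v ∈ W (w + k), v ∈ expl N w (w + k) := by
      intro d
      induction d with
      | zero =>
        intro k hk v hv
        refine mem_expl 0 k (by push_cast; ring) ?_
        rw [pow_eq_zero_of_le (by omega) hn]; rfl
      | succ d ih =>
        intro k hk v hv
        have h1 := wt_pow hW _ (k + 1) hv
        obtain ⟨u, hu, hu2⟩ := wt_surj hW (k + 2) (v := (N ^ (k + 1)) v)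
          (by convert h1 using 2; push_cast; ring)
        have h2 := expl_pow (w := w) _ (w + k) 1 (by push_cast; ring) (ih (k + 2) (by omega) u hu)
        have h3 : v - N u ∈ expl N w (w + k) := by
          have h4 := mem_expl (N := N) (w := w) (k := w + k) (v := v - N u) 0 k
            (by push_cast; ring)
            (by rw [map_sub, ← hu2, pow_succ N (k + 1), Module.End.mul_apply, sub_self])
          rwa [pow_zero, Module.End.one_apply] at h4
        rw [pow_one] at h2
        simpa using Submodule.add_mem _ h3 h2
    intro v hv
    obtain ⟨q, rfl⟩ : ∃ q, k = w + q := ⟨k - w, by ring⟩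
    rcases Int.eq_nat_or_neg q with ⟨q, rfl | rfl⟩
    · exact key n q (by omega) v hv
    · obtain ⟨u, hu, rfl⟩ := wt_surj hW q hv
      exact expl_pow _ _ q (by ring) (key n q (by omega) u hu)
  · refine iSup_le fun l => iSup_le fun m => iSup_le fun hm => ?_
    rintro _ ⟨u, hu, rfl⟩
    have := wt_pow hW _ l (wt_ker hW m hu)
    rwa [show w + (m : ℤ) - 2 * l = k by linarith] at this

end uniq

section jm

open Polynomial in
theorem jordan {F V : Type*} [Field F] [AddCommGroup V] [Module F V] [FiniteDimensional F V]
    (N : V →ₗ[F] V) (hN : IsNilpotent N) :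
    ∃ (n : ℕ) (d : Fin n → ℕ) (g : Fin n → V) (b : Module.Basis (Σ i, Fin (d i)) F V),
      (∀ i k, b ⟨i, k⟩ = (N ^ (k : ℕ)) (g i)) ∧ ∀ i, (N ^ (d i)) (g i) = 0 := by
  obtain ⟨s, hs⟩ := hN
  have htor : Module.IsTorsion' (Module.AEval' N) (Submonoid.powers (X : F[X])) := by
    intro x
    refine ⟨⟨X ^ s, s, rfl⟩, ?_⟩
    obtain ⟨x, rfl⟩ := (Module.AEval'.of N).surjective x
    change (X ^ s : F[X]) • (Module.AEval'.of N x) = 0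
    rw [Module.AEval'.X_pow_smul_of, hs, zero_smul, map_zero]
  obtain ⟨n, d, ⟨e⟩⟩ := Module.torsion_by_prime_power_decomposition (p := (X : F[X]))
    irreducible_X htor
  have hpb : ∀ i, ∃ b : Module.Basis (Fin (d i)) F (F[X] ⧸ Ideal.span {(X ^ d i : F[X])}),
      ∀ k, b k = (X ^ (k : ℕ) : F[X]) • (Submodule.Quotient.mk 1) := by
    intro i
    have hdeg : (X ^ d i : F[X]).natDegree = d i := natDegree_X_pow _
    let b0 : Module.Basis (Fin (X ^ d i : F[X]).natDegree) F
        (F[X] ⧸ Ideal.span {(X ^ d i : F[X])}) :=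
      (AdjoinRoot.powerBasis' (monic_X_pow (R := F) (d i))).basis
    refine ⟨b0.reindex (finCongr hdeg), fun k => ?_⟩
    rw [Module.Basis.reindex_apply]
    have h1 := (AdjoinRoot.powerBasis' (monic_X_pow (R := F) (d i))).basis_eq_pow
      ((finCongr hdeg).symm k)
    refine h1.trans ?_
    rw [← Submodule.Quotient.mk_smul, smul_eq_mul, mul_one]
    rw [AdjoinRoot.powerBasis'_gen, ← AdjoinRoot.mk_X, ← map_pow]
    rfl
  choose pb hpb using hpb
  let B : Module.Basis (Σ i, Fin (d i)) F
      (Π₀ i, F[X] ⧸ Ideal.span {(X ^ d i : F[X])}) := DFinsupp.basis pb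
  have hB : ∀ i k, B ⟨i, k⟩ = DFinsupp.single i (pb i k) := by
    intro i k
    have h1 : B ⟨i, k⟩ = (DFinsupp.mapRange.linearEquiv fun i => (pb i).repr).symm
      (sigmaFinsuppLequivDFinsupp F (Finsupp.single ⟨i, k⟩ 1)) := rfl
    rw [h1, LinearEquiv.symm_apply_eq]
    simp
  let e1 : Module.AEval' N ≃ₗ[F[X]] (Π₀ i, F[X] ⧸ Ideal.span {(X ^ d i : F[X])}) := e
  let g : Fin n → V := fun i => (Module.AEval'.of N).symm
    (e1.symm (DFinsupp.single i (Submodule.Quotient.mk 1)))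
  let e' : Module.AEval' N ≃ₗ[F] (Π₀ i, F[X] ⧸ Ideal.span {(X ^ d i : F[X])}) :=
    e1.restrictScalars F
  have hg : ∀ i, ∀ k : ℕ, (N ^ k) (g i) = (Module.AEval'.of N).symm
      (e1.symm (DFinsupp.single i ((X ^ k : F[X]) • (Submodule.Quotient.mk 1)))) := by
    intro i k
    rw [DFinsupp.single_smul, map_smul]
    apply (Module.AEval'.of N).injective
    rw [LinearEquiv.apply_symm_apply]
    have := Module.AEval'.X_pow_smul_of N (g i) k
    rw [Module.End.smul_def] at this
    rw [← this]
    simp only [g, LinearEquiv.apply_symm_apply]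
  refine ⟨n, d, g, B.map (e'.symm.trans (Module.AEval'.of N).symm), ?_, ?_⟩
  · intro i k
    rw [Module.Basis.map_apply, hB, hg, hpb]
    rfl
  · intro i
    rw [hg, ← Submodule.Quotient.mk_smul, (Submodule.Quotient.mk_eq_zero _).2, DFinsupp.single_zero,
      map_zero, map_zero]
    rw [smul_eq_mul, mul_one]
    exact Ideal.subset_span rfl

/-- Jacobson–Morozov for a nilpotent endomorphism. -/
theorem jm {F V : Type*} [Field F] [AddCommGroup V] [Module F V] [FiniteDimensional F V]
    (N : V →ₗ[F] V) (hN : IsNilpotent N) :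
    ∃ X H : V →ₗ[F] V, Trip X N H ∧ ⨆ m, eig H m = ⊤ := by
  obtain ⟨n, d, g, b, hb, hg⟩ := jordan N hN
  let H : V →ₗ[F] V := b.constr F fun p => ((d p.1 - 1 - 2 * (p.2 : ℕ) : ℤ) : F) • b p
  let X : V →ₗ[F] V := b.constr F fun p =>
    (((p.2 : ℕ) * (d p.1 - (p.2 : ℕ)) : ℤ) : F) • (N ^ ((p.2 : ℕ) - 1)) (g p.1)
  have h0 : ∀ i, ∀ k : ℕ, d i ≤ k → (N ^ k) (g i) = 0 := fun i k hk => by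
    rw [← Nat.sub_add_cancel hk, pow_add, Module.End.mul_apply, hg, map_zero]
  have hH : ∀ i, ∀ k : ℕ, H ((N ^ k) (g i)) = ((d i - 1 - 2 * k : ℤ) : F) • (N ^ k) (g i) := by
    intro i k
    by_cases hk : k < d i
    · have := b.constr_basis F (fun p => ((d p.1 - 1 - 2 * (p.2 : ℕ) : ℤ) : F) • b p) ⟨i, ⟨k, hk⟩⟩
      have e0 := hb i ⟨k, hk⟩
      dsimp only at e0
      rw [← e0]
      exact this
    · rw [h0 i k (by omega), map_zero, smul_zero]
  have hX : ∀ i, ∀ k : ℕ, k ≤ d i →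
      X ((N ^ k) (g i)) = ((k * (d i - k) : ℤ) : F) • (N ^ (k - 1)) (g i) := by
    intro i k hk'
    by_cases hk : k < d i
    · have := b.constr_basis F (fun p => (((p.2 : ℕ) * (d p.1 - (p.2 : ℕ)) : ℤ) : F) •
        (N ^ ((p.2 : ℕ) - 1)) (g p.1)) ⟨i, ⟨k, hk⟩⟩
      simpa only [hb] using this
    · have : k = d i := by omega
      subst this
      rw [hg]; simp
  have hs : ∀ u v : V →ₗ[F] V,
      (∀ i, ∀ k : ℕ, k < d i → u ((N ^ k) (g i)) = v ((N ^ k) (g i))) → u = v := by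
    intro u v h
    refine b.ext fun ⟨i, k⟩ => ?_
    rw [hb]
    exact h i k k.2
  have hNs : ∀ i, ∀ k : ℕ, N ((N ^ k) (g i)) = (N ^ (k + 1)) (g i) := fun i k => by
    rw [pow_succ', Module.End.mul_apply]
  have e1 : X * N = N * X + H := by
    refine hs _ _ fun i k hk => ?_
    simp only [Module.End.mul_apply, LinearMap.add_apply]
    rw [hNs, hX i _ hk, hX i k hk.le, hH, map_smul]
    rcases k with _ | k
    · simp
    · rw [hNs]
      simp only [Nat.add_sub_cancel]
      rw [← add_smul]
      congr 1
      push_cast; ring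
  have e2 : H * X = X * H + (2 : F) • X := by
    refine hs _ _ fun i k hk => ?_
    simp only [Module.End.mul_apply, LinearMap.add_apply, LinearMap.smul_apply]
    rw [hH, map_smul, hX i k hk.le, map_smul, hH]
    rcases k with _ | k
    · simp
    · simp only [Nat.add_sub_cancel, smul_smul]
      rw [← add_smul]
      congr 1
      push_cast; ring
  have e3 : H * N = N * H - (2 : F) • N := by
    refine hs _ _ fun i k hk => ?_
    simp only [Module.End.mul_apply, LinearMap.sub_apply, LinearMap.smul_apply]
    rw [hH, map_smul, hNs, hH, ← sub_smul]
    congr 1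
    push_cast; ring
  refine ⟨X, H, ⟨fun v => congrArg (· v) e1, fun v => congrArg (· v) e2,
    fun v => congrArg (· v) e3⟩, ?_⟩
  rw [eq_top_iff, ← b.span_eq, Submodule.span_le]
  rintro _ ⟨⟨i, k⟩, rfl⟩
  refine (le_iSup (eig H) (d i - 1 - 2 * (k : ℕ))) ?_
  rw [mem_eig, hb]
  exact hH i k

end jm

section ext

variable {F V : Type*} [Field F] [AddCommGroup V] [Module F V] {j : ℕ}

theorem wedge_eq (v : Fin j → V) : wedge F j v = exteriorPower.ιMulti F j v := rfl

/-- The multilinear map underlying the derivation extension. -/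
noncomputable def derMul (j : ℕ) (f : V →ₗ[F] V) :
    MultilinearMap F (fun _ : Fin j => V) (⋀[F]^j V) :=
  ∑ k : Fin j, (exteriorPower.ιMulti F j (M := V)).toMultilinearMap.compLinearMap
    (Function.update (fun _ => LinearMap.id) k f)

theorem derMul_apply (f : V →ₗ[F] V) (v : Fin j → V) :
    derMul j f v = ∑ k : Fin j, wedge F j (Function.update v k (f (v k))) := by
  rw [derMul, _root_.sum_apply]
  refine Finset.sum_congr rfl fun k _ => ?_
  rw [MultilinearMap.compLinearMap_apply, wedge_eq]
  change exteriorPower.ιMulti F j _ = _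
  congr 1
  ext i
  by_cases h : i = k
  · subst h; simp
  · simp [h]

/-- The alternating map underlying the derivation extension. -/
noncomputable def derAlt (j : ℕ) (f : V →ₗ[F] V) : V [⋀^Fin j]→ₗ[F] (⋀[F]^j V) :=
  { derMul j f with
    map_eq_zero_of_eq' := by
      intro v a b hab hne
      change derMul j f v = 0
      rw [derMul_apply, Fintype.sum_eq_add a b hne]
      · simp only [wedge_eq]
        have h1 : Function.update v b (f (v b)) =
            Function.update v a (f (v a)) ∘ Equiv.swap a b := by
          ext i
          by_cases hb : i = b
          · subst hb; simp [hab]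
          · by_cases ha : i = a
            · subst ha; simp [hne, hne.symm, hab]
            · simp [ha, hb, Equiv.swap_apply_of_ne_of_ne ha hb]
        rw [h1, AlternatingMap.map_swap _ _ hne, add_neg_cancel]
      · rintro k ⟨ha, hb⟩
        rw [wedge_eq]
        refine AlternatingMap.map_eq_zero_of_eq _ _ ?_ hne
        simp [ha.symm, hb.symm, hab] }

/-- The derivation extension of an endomorphism. -/
noncomputable def der (j : ℕ) (f : V →ₗ[F] V) : ⋀[F]^j V →ₗ[F] ⋀[F]^j V :=
  exteriorPower.alternatingMapLinearEquiv (derAlt j f)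

theorem der_wedge (f : V →ₗ[F] V) (v : Fin j → V) :
    der j f (wedge F j v) = ∑ k : Fin j, wedge F j (Function.update v k (f (v k))) := by
  rw [wedge_eq, der, exteriorPower.alternatingMapLinearEquiv_apply_ιMulti, ← derMul_apply]
  rfl

theorem hom_ext {A B : ⋀[F]^j V →ₗ[F] ⋀[F]^j V}
    (h : ∀ v, A (wedge F j v) = B (wedge F j v)) : A = B := by
  apply exteriorPower.linearMap_ext
  ext v
  exact congrArg _ (h v)

theorem der_smul (a : F) (f : V →ₗ[F] V) : der j (a • f) = a • der j f := by
  refine hom_ext fun v => ?_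
  rw [LinearMap.smul_apply, der_wedge, der_wedge, Finset.smul_sum]
  refine Finset.sum_congr rfl fun k _ => ?_
  simp only [wedge_eq, LinearMap.smul_apply, AlternatingMap.map_update_smul]

theorem der_comm (f g : V →ₗ[F] V) :
    der j f * der j g - der j g * der j f = der j (f * g - g * f) := by
  refine hom_ext fun v => ?_
  simp only [LinearMap.sub_apply, Module.End.mul_apply, der_wedge, map_sum]
  rw [Finset.sum_comm (s := Finset.univ) (t := Finset.univ) (f := fun k l =>
    wedge F j (Function.update (Function.update v k (f (v k))) l
      (g (Function.update v k (f (v k)) l))))]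
  rw [← Finset.sum_sub_distrib]
  refine Finset.sum_congr rfl fun k _ => ?_
  rw [← Finset.sum_sub_distrib, Finset.sum_eq_single k]
  · simp only [Function.update_self, Function.update_idem, wedge_eq,
      AlternatingMap.map_update_sub]
  · intro l _ hl
    rw [Function.update_of_ne hl, Function.update_of_ne hl.symm, Function.update_comm hl, sub_self]
  · simp

theorem der_trip {X Y H : V →ₗ[F] V} (h : Trip X Y H) : Trip (der j X) (der j Y) (der j H) := by
  have e1 : X * Y - Y * X = H := by ext v; simp [h.xy]
  have e2 : H * X - X * H = (2 : F) • X := by ext v; simp [h.hx]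
  have e3 : H * Y - Y * H = (-2 : F) • Y := by ext v; simp [h.hy]
  have d1 := der_comm (j := j) X Y
  have d2 := der_comm (j := j) H X
  have d3 := der_comm (j := j) H Y
  rw [e1] at d1
  rw [e2, der_smul] at d2
  rw [e3, der_smul] at d3
  refine ⟨fun v => ?_, fun v => ?_, fun v => ?_⟩
  · have := congrArg (· v) d1
    simp only [LinearMap.sub_apply, Module.End.mul_apply] at this
    rw [← this]; abel
  · have := congrArg (· v) d2
    simp only [LinearMap.sub_apply, Module.End.mul_apply, LinearMap.smul_apply] at this
    rw [← this]; abel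
  · have := congrArg (· v) d3
    simp only [LinearMap.sub_apply, Module.End.mul_apply, LinearMap.smul_apply, neg_smul] at this
    rw [sub_eq_iff_eq_add.1 this]; abel

theorem wedge_eig {H : V →ₗ[F] V} {v : Fin j → V} {c : Fin j → ℤ}
    (hv : ∀ k, v k ∈ eig H (c k)) : wedge F j v ∈ eig (der j H) (∑ k, c k) := by
  rw [mem_eig, der_wedge, Int.cast_sum, Finset.sum_smul]
  refine Finset.sum_congr rfl fun k _ => ?_
  rw [mem_eig.1 (hv k), wedge_eq, AlternatingMap.map_update_smul, Function.update_eq_self, wedge_eq]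

theorem exists_sum (e : ℤ → Submodule F V) (S : Set ℤ) {v : V}
    (hv : v ∈ ⨆ m, ⨆ _ : m ∈ S, e m) :
    ∃ (A : Finset ℤ) (g : ℤ → V), (∀ m ∈ A, m ∈ S ∧ g m ∈ e m) ∧ v = ∑ m ∈ A, g m := by
  obtain ⟨f, hf, rfl⟩ := (Submodule.mem_iSup_iff_exists_finsupp _ _).1 hv
  refine ⟨f.support, f, fun m hm => ?_, rfl⟩
  have h1 := hf m
  by_cases hS : m ∈ S
  · rw [iSup_pos hS] at h1
    exact ⟨hS, h1⟩
  · rw [iSup_neg hS] at h1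
    exact absurd ((Submodule.mem_bot F).1 h1) (Finsupp.mem_support_iff.1 hm)

theorem wedge_expand (e : ℤ → Submodule F V) (S : Fin j → Set ℤ) (v : Fin j → V)
    (hv : ∀ k, v k ∈ ⨆ m, ⨆ _ : m ∈ S k, e m) (P : Submodule F (⋀[F]^j V))
    (hP : ∀ (r : Fin j → ℤ) (u : Fin j → V), (∀ k, r k ∈ S k) → (∀ k, u k ∈ e (r k)) →
      wedge F j u ∈ P) : wedge F j v ∈ P := by
  choose A g hA hg using fun k => exists_sum e (S k) (hv k)
  have hv' : v = fun k => ∑ m ∈ A k, g k m := funext hg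
  have h1 := (exteriorPower.ιMulti F j (M := V)).toMultilinearMap.map_sum_finset g A
  have h2 : wedge F j v = ∑ r ∈ Fintype.piFinset A, wedge F j fun i => g i (r i) := by
    rw [hv']; exact h1
  rw [h2]
  refine Submodule.sum_mem _ fun r hr => ?_
  rw [Fintype.mem_piFinset] at hr
  exact hP r _ (fun k => (hA k _ (hr k)).1) (fun k => (hA k _ (hr k)).2)

/-- Span of wedges of homogeneous vectors. -/
def hom (j : ℕ) (H : V →ₗ[F] V) (m : ℤ) : Submodule F (⋀[F]^j V) :=
  Submodule.span F {x | ∃ (c : Fin j → ℤ) (v : Fin j → V), ∑ k, c k = m ∧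
    (∀ k, v k ∈ eig H (c k)) ∧ wedge F j v = x}

theorem hom_le (H : V →ₗ[F] V) (m : ℤ) : hom j H m ≤ eig (der j H) m := by
  refine Submodule.span_le.2 ?_
  rintro _ ⟨c, v, rfl, hv, rfl⟩
  exact wedge_eig hv

theorem hom_top (H : V →ₗ[F] V) (htop : ⨆ m, eig H m = ⊤) : ⨆ m, hom j H m = ⊤ := by
  rw [eq_top_iff, ← exteriorPower.ιMulti_span, Submodule.span_le]
  rintro _ ⟨v, rfl⟩
  refine wedge_expand (eig H) (fun _ => Set.univ) v (fun k => ?_) _ ?_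
  · simp [htop]
  · intro r u _ hu
    exact (le_iSup (hom j H) (∑ k, r k)) (Submodule.subset_span ⟨r, u, rfl, hu, rfl⟩)

theorem der_top (H : V →ₗ[F] V) (htop : ⨆ m, eig H m = ⊤) : ⨆ m, eig (der j H) m = ⊤ :=
  eq_top_iff.2 ((hom_top H htop).ge.trans (iSup_mono (hom_le H)))

theorem ext_filt [CharZero F] (hj : 0 < j) (H : V →ₗ[F] V) (htop : ⨆ m, eig H m = ⊤) (w i : ℤ) :
    extPowerFiltration F j (filt H w) i = filt (der j H) (w * j) i := by
  apply le_antisymm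
  · refine iSup_le fun c => Submodule.span_le.2 ?_
    rintro _ ⟨v, hv, rfl⟩
    refine wedge_expand (fun m => eig H (m - w)) (fun k => {m | m ≤ c.1 k}) v hv _ ?_
    intro r u hr hu
    have h1 := wedge_eig hu
    have h2 : ∑ k, (r k - w) = (∑ k, r k) - w * j := by
      simp [Finset.sum_sub_distrib, mul_comm]
    rw [h2] at h1
    refine eig_le_filt _ ?_ h1
    rw [← c.2]
    exact Finset.sum_le_sum fun k _ => hr k
  · refine iSup₂_le fun m hm => ?_
    rw [← eig_eq_of_le _ _ (hom_le H) (hom_top H htop)]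
    refine Submodule.span_le.2 ?_
    rintro _ ⟨c, v, hc, hv, rfl⟩
    let c' : Fin j → ℤ := fun k => c k + w + if k = ⟨0, hj⟩ then i - m else 0
    have hc' : ∑ k, c' k = i := by
      simp only [c', Finset.sum_add_distrib, hc, Finset.sum_ite_eq', Finset.mem_univ, if_true,
        Finset.sum_const, Finset.card_univ, Fintype.card_fin, nsmul_eq_mul]
      ring
    refine (le_iSup (fun c : {c : Fin j → ℤ // ∑ k, c k = i} => Submodule.span F
      {x : ⋀[F]^j V | ∃ v : Fin j → V, (∀ k, v k ∈ filt H w (c.1 k)) ∧ wedge F j v = x})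
      ⟨c', hc'⟩) (Submodule.subset_span ⟨v, fun k => ?_, rfl⟩)
    have h3 : c k + w ≤ c' k := by
      simp only [c']
      split_ifs <;> linarith
    refine eig_le_filt H h3 ?_
    simpa using hv k

theorem wt_nilp {N : V →ₗ[F] V} {w : ℤ} {W : ℤ → Submodule F V}
    (hW : IsWeightFiltration N w W) : IsNilpotent N := by
  obtain ⟨a, ha⟩ := hW.2.1
  obtain ⟨b, hb⟩ := hW.2.2.1
  refine ⟨(b - a).toNat, LinearMap.ext fun v => ?_⟩
  have h1 := wt_pow hW b (b - a).toNat (v := v) (by rw [hb b le_rfl]; trivial)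
  rw [ha _ (by omega)] at h1
  simpa using h1

end ext

end WF

/-- Let `W` be the weight filtration centered at `w` associated to a nilpotent endomorphism
`N` of a finite dimensional vector space `V` over a field of characteristic zero, and for
an integer `j > 0` let `N^{(∧j)}` be the unique endomorphism `D` of `⋀^j V` with
`D (v₁ ∧ ⋯ ∧ v_j) = Σ_k v₁ ∧ ⋯ ∧ N v_k ∧ ⋯ ∧ v_j`. Then `N^{(∧j)}` is nilpotent and the
weight filtration on `⋀^j V` centered at `w · j` associated to `N^{(∧j)}` is the exterior
power filtration `∧^j W`. -/
theorem weightFiltration_exteriorPower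
    (F V : Type*) [Field F] [CharZero F] [AddCommGroup V] [Module F V]
    [FiniteDimensional F V]
    (N : V →ₗ[F] V) (hN : IsNilpotent N) (w : ℤ) (W : ℤ → Submodule F V)
    (hW : IsWeightFiltration N w W)
    (j : ℕ) (hj : 0 < j)
    (D : ⋀[F]^j V →ₗ[F] ⋀[F]^j V)
    (hD : ∀ v : Fin j → V,
      D (wedge F j v) = ∑ k : Fin j, wedge F j (Function.update v k (N (v k)))) :
    IsNilpotent D ∧
      IsWeightFiltration D (w * j) (extPowerFiltration F j W) := by
  obtain ⟨X, H, hT, htop⟩ := WF.jm N hN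
  have hWH : W = WF.filt H w := by
    funext k
    rw [WF.wt_eq hN hW, WF.wt_eq hN (hT.weight htop w)]
  have hDN : D = WF.der j N := WF.hom_ext fun v => by rw [hD, WF.der_wedge]
  have hE : extPowerFiltration F j W = WF.filt (WF.der j H) (w * j) := by
    funext i
    rw [hWH, WF.ext_filt hj H htop]
  have key := (WF.der_trip (j := j) hT).weight (WF.der_top H htop) (w * j)
  rw [hDN, hE]
  exact ⟨WF.wt_nilp key, key⟩
end

section
/- Let F be a field of characteristic zero, let V and V′ be finite-dimensional F-vector spaces, and let M, M′ be automorphisms of V, V′ with Jordan–Chevalley decompositions M = M_s + M_n and M′ = M′_s + M′_n. Let W be the weight filtration on V centered at w ∈ ℤ associated to M_n and W′ the weight filtration on V′ centered at w′ ∈ ℤ associated to M′_n. If M ⊗ M′ = T + P is a Jordan–Chevalley decomposition of the automorphism M ⊗ M′ of V ⊗ V′ (T semisimple, P nilpotent, T ∘ P = P ∘ T), then the weight filtration on V ⊗ V′ centered at w + w′ associated to P is the tensor product filtration W ⊗ W′, defined by (W ⊗ W′)_i = Σ_{i₁+i₂=i} W_{i₁} ⊗ W′_{i₂}. -/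
open TensorProduct

theorem wf_mem_of_kernel {F V : Type*} [Field F] [AddCommGroup V] [Module F V]
    {N : V →ₗ[F] V} {W : ℤ → Submodule F V}
    (h4 : ∀ i : ℤ, (W i).map N ≤ W (i - 2)) (n : ℕ) :
    ∀ (i : ℤ) (v : V), v ∈ W i → (N ^ n) v ∈ W (i - 2 * n) := by
  induction n with
  | zero => intro i v hv; simpa using hv
  | succ n ih =>
    intro i v hv
    rw [pow_succ']
    have := h4 _ (Submodule.mem_map_of_mem (f := N) (ih i v hv))
    have e : i - 2 * ((n + 1 : ℕ) : ℤ) = i - 2 * n - 2 := by push_cast; ring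
    rw [e]; exact this

theorem wf_le {F V : Type*} [Field F] [AddCommGroup V] [Module F V]
    {N : V →ₗ[F] V} {w : ℤ} {W U : ℤ → Submodule F V}
    (hW : IsWeightFiltration N w W) (hU : IsWeightFiltration N w U) (i : ℤ) : W i ≤ U i := by
  obtain ⟨mW, ⟨a, ha⟩, ⟨b, hb⟩, nW, cW⟩ := hW
  obtain ⟨mU, ⟨a', ha'⟩, ⟨b', hb'⟩, nU, cU⟩ := hU
  -- large index
  obtain ⟨L, hL⟩ : ∃ L : ℕ, b' - w ≤ L ∧ w - a ≤ L :=
    ⟨(max (b' - w) (w - a)).toNat, by omega, by omega⟩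
  have key : ∀ d l : ℕ, l + d = L → ∀ m : ℤ, (l : ℤ) ≤ m →
      W (w + m) ≤ U (w + m) ∧ W (w - m) ≤ U (w - m) := by
    intro d
    induction d with
    | zero =>
      intro l hl m hm
      constructor
      · rw [hb' (w + m) (by omega)]; exact le_top
      · rw [ha (w - m) (by omega)]; exact bot_le
    | succ d ih =>
      intro l hl m hm
      have ih' := ih (l + 1) (by omega)
      rcases eq_or_lt_of_le hm with h | h
      swap
      · exact ih' m (by push_cast; omega)
      subst h
      have first : W (w + l) ≤ U (w + l) := by
        intro v hv
        have desc : ∀ t : ℕ, v ∈ U (w + l + t) → v ∈ U (w + l) := by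
          intro t
          induction t with
          | zero => intro h; simpa using h
          | succ t iht =>
            intro h
            apply iht
            have hc := (cU (l + (t + 1)) (by omega)).2 v (by
              have e : w + ((l : ℤ) + (t + 1)) = w + l + ((t + 1 : ℕ) : ℤ) := by push_cast; ring
              rw [e]; exact h) (by
              have hx := wf_mem_of_kernel nW ((l : ℤ) + (t + 1)).toNat _ v hv
              have h1 := (ih' (l + (t + 1) + 1) (by push_cast; omega)).2
              have e : w - ((l : ℤ) + (t + 1)) - 1 = w - (l + (t + 1) + 1) := by ring
              rw [e]
              apply h1
              refine mW ?_ hx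
              omega)
            have e : w + ((l : ℤ) + (t + 1)) - 1 = w + l + t := by ring
            rw [e] at hc; exact hc
        apply desc (b' - w - l).toNat
        rw [hb' _ (by omega)]; trivial
      refine ⟨first, ?_⟩
      rcases Nat.eq_zero_or_pos l with h0 | h0
      · subst h0; simpa using first
      refine ((cW l (by omega)).1).trans (sup_le ?_ ?_)
      · have h1 := (ih' (l + 1) (by push_cast; omega)).2
        have e : w - (l : ℤ) - 1 = w - (l + 1) := by ring
        rw [e]
        exact h1.trans (mU (by omega))
      · rintro _ ⟨v, hv, rfl⟩
        have := wf_mem_of_kernel nU ((l : ℤ)).toNat _ v (first hv)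
        refine mU ?_ this
        omega
  have k0 := key L 0 (by omega)
  rcases le_total w i with h | h
  · have := (k0 (i - w) (by push_cast; omega)).1
    simpa using this
  · have := (k0 (w - i) (by push_cast; omega)).2
    simpa using this

theorem wf_unique {F V : Type*} [Field F] [AddCommGroup V] [Module F V]
    {N : V →ₗ[F] V} {w : ℤ} {W U : ℤ → Submodule F V}
    (hW : IsWeightFiltration N w W) (hU : IsWeightFiltration N w U) : W = U :=
  funext fun i => le_antisymm (wf_le hW hU i) (wf_le hU hW i)

theorem wf_map_equiv {F V : Type*} [Field F] [AddCommGroup V] [Module F V]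
    {N : V →ₗ[F] V} {w : ℤ} {W : ℤ → Submodule F V}
    (hW : IsWeightFiltration N w W) (S S' : V →ₗ[F] V) (h1 : S * S' = 1) (h2 : S' * S = 1)
    (hc : Commute S N) : IsWeightFiltration N w (fun i => (W i).map S) := by
  obtain ⟨mW, ⟨a, ha⟩, ⟨b, hb⟩, nW, cW⟩ := hW
  have e1 : ∀ v, S (S' v) = v := fun v => LinearMap.congr_fun h1 v
  have e2 : ∀ v, S' (S v) = v := fun v => LinearMap.congr_fun h2 v
  have hcn : ∀ (n : ℕ) v, (N ^ n) (S v) = S ((N ^ n) v) := fun n v =>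
    (LinearMap.congr_fun (hc.pow_right n) v).symm
  have hmem : ∀ i v, S v ∈ (W i).map S → v ∈ W i := by
    rintro i v ⟨u, hu, huv⟩
    have : u = v := by rw [← e2 u, huv, e2]
    exact this ▸ hu
  refine ⟨fun i j h => Submodule.map_mono (mW h), ⟨a, fun i hi => ?_⟩, ⟨b, fun i hi => ?_⟩, ?_, ?_⟩
  · simp [ha i hi]
  · simp only [hb i hi]
    rw [eq_top_iff]
    intro v _
    exact ⟨S' v, trivial, e1 v⟩
  · rintro i _ ⟨_, ⟨v, hv, rfl⟩, rfl⟩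
    refine ⟨N v, nW i ⟨v, hv, rfl⟩, ?_⟩
    simpa using (hcn 1 v).symm
  · intro α hα
    refine ⟨?_, ?_⟩
    · rintro _ ⟨v, hv, rfl⟩
      obtain ⟨x, hx, y, ⟨z, hz, rfl⟩, rfl⟩ := Submodule.mem_sup.1 ((cW α hα).1 hv)
      refine Submodule.mem_sup.2 ⟨S x, ⟨x, hx, rfl⟩, _, ⟨S z, ⟨z, hz, rfl⟩, rfl⟩, ?_⟩
      rw [hcn, map_add]
    · rintro _ ⟨v, hv, rfl⟩ h
      rw [hcn] at h
      exact ⟨v, (cW α hα).2 v hv (hmem _ _ h), rfl⟩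

theorem wf_unit_mul {F V : Type*} [Field F] [AddCommGroup V] [Module F V]
    {N : V →ₗ[F] V} {w : ℤ} {W : ℤ → Submodule F V}
    (hW : IsWeightFiltration N w W) (S S' : V →ₗ[F] V) (h1 : S * S' = 1) (h2 : S' * S = 1)
    (hc : Commute S N) : IsWeightFiltration (S * N) w W := by
  have hS : ∀ i, (W i).map S = W i := fun i =>
    congrFun (wf_unique (wf_map_equiv hW S S' h1 h2 hc) hW) i
  have hSn : ∀ (n : ℕ) i, (W i).map (S ^ n) = W i := by
    intro n i
    induction n with
    | zero => rw [pow_zero]; exact Submodule.map_id _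
    | succ n ih => rw [pow_succ, Module.End.mul_eq_comp, Submodule.map_comp, hS, ih]
  have hinj : ∀ (n : ℕ) , Function.Injective (S ^ n) := by
    intro n
    have : Function.Injective S := fun x y h => by
      have := congrArg S' h
      have e2 : ∀ v, S' (S v) = v := fun v => LinearMap.congr_fun h2 v
      rwa [e2, e2] at this
    rw [Module.End.coe_pow]; exact this.iterate n
  obtain ⟨mW, hA, hB, nW, cW⟩ := hW
  refine ⟨mW, hA, hB, ?_, ?_⟩
  · intro i
    rw [Module.End.mul_eq_comp, Submodule.map_comp, ← hS (i - 2)]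
    exact Submodule.map_mono (nW i)
  · intro α hα
    have e : (S * N) ^ α.toNat = S ^ α.toNat * N ^ α.toNat := hc.mul_pow _
    rw [e]
    constructor
    · rw [Module.End.mul_eq_comp, Submodule.map_comp]
      have := Submodule.map_mono (f := S ^ α.toNat) (cW α hα).1
      rw [Submodule.map_sup, hSn, hSn] at this
      exact this
    · intro v hv h
      apply (cW α hα).2 v hv
      rw [← hSn α.toNat] at h
      obtain ⟨u, hu, huv⟩ := h
      rw [Module.End.mul_apply] at huv
      exact hinj _ huv ▸ hu

theorem wf_perturb {F V : Type*} [Field F] [AddCommGroup V] [Module F V]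
    {N R : V →ₗ[F] V} {w : ℤ} {W : ℤ → Submodule F V}
    (hW : IsWeightFiltration N w W) (hR : ∀ i, (W i).map R ≤ W (i - 3)) :
    IsWeightFiltration (N + R) w W := by
  obtain ⟨mW, hA, hB, nW, cW⟩ := hW
  have nW' : ∀ i : ℤ, (W i).map (N + R) ≤ W (i - 2) := by
    rintro i _ ⟨v, hv, rfl⟩
    exact add_mem (nW i ⟨v, hv, rfl⟩) (mW (by omega) (hR i ⟨v, hv, rfl⟩))
  have diff : ∀ (n : ℕ) (i : ℤ) (v : V), v ∈ W i →
      ((N + R) ^ n) v - (N ^ n) v ∈ W (i - 2 * n - 1) := by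
    intro n
    induction n with
    | zero => intro i v hv; simp
    | succ n ih =>
      intro i v hv
      have h1 := nW _ ⟨_, ih i v hv, rfl⟩
      have h2 := hR _ ⟨_, wf_mem_of_kernel nW' n i v hv, rfl⟩
      have e1 : i - 2 * ((n + 1 : ℕ) : ℤ) - 1 = i - 2 * n - 1 - 2 := by push_cast; ring
      have e2 : i - 2 * (n : ℤ) - 3 = i - 2 * n - 1 - 2 := by ring
      rw [e2] at h2
      rw [e1]
      have := add_mem h1 h2
      convert this using 1
      rw [pow_succ', pow_succ']
      simp only [Module.End.mul_apply, LinearMap.add_apply, map_sub]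
      abel
  refine ⟨mW, hA, hB, nW', ?_⟩
  intro α hα
  have hd : ∀ v ∈ W (w + α), ((N + R) ^ α.toNat) v - (N ^ α.toNat) v ∈ W (w - α - 1) := by
    intro v hv
    exact mW (by omega) (diff α.toNat _ v hv)
  constructor
  · refine (cW α hα).1.trans (sup_le le_sup_left ?_)
    rintro _ ⟨v, hv, rfl⟩
    refine Submodule.mem_sup.2 ⟨_, neg_mem (hd v hv), _, ⟨v, hv, rfl⟩, ?_⟩
    abel
  · intro v hv h
    apply (cW α hα).2 v hv
    have := sub_mem h (hd v hv)
    simpa using this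

structure Sl2Rel {F V : Type*} [Field F] [AddCommGroup V] [Module F V]
    (h e f : Module.End F V) : Prop where
  he : h * e = e * h + 2 * e
  hf : h * f = f * h - 2 * f
  ef : e * f = f * e + h

namespace Sl2Rel

variable {F V : Type*} [Field F] [AddCommGroup V] [Module F V] {h e f : Module.End F V}

theorem swap (H : Sl2Rel h e f) : Sl2Rel (-h) f e where
  he := by rw [neg_mul, H.hf]; noncomm_ring
  hf := by rw [neg_mul, H.he]; noncomm_ring
  ef := by have := H.ef; grind

theorem mem_e (H : Sl2Rel h e f) (k : ℤ) (v : V)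
    (hv : v ∈ Module.End.eigenspace h (k : F)) :
    e v ∈ Module.End.eigenspace h ((k + 2 : ℤ) : F) := by
  rw [Module.End.mem_eigenspace_iff] at *
  have := LinearMap.congr_fun H.he v
  simp only [Module.End.mul_apply, LinearMap.add_apply, hv, map_smul] at this
  rw [this, show (2 : Module.End F V) (e v) = (2 : F) • e v by
    rw [← Nat.cast_ofNat, Module.End.natCast_apply]; norm_num [two_smul]]
  push_cast
  rw [add_smul]

theorem mem_neg (k : ℤ) (v : V) : v ∈ Module.End.eigenspace (-h) (k : F) ↔
    v ∈ Module.End.eigenspace h ((-k : ℤ) : F) := by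
  rw [Module.End.mem_eigenspace_iff, Module.End.mem_eigenspace_iff]
  simp [neg_eq_iff_eq_neg]

theorem mem_f (H : Sl2Rel h e f) (k : ℤ) (v : V)
    (hv : v ∈ Module.End.eigenspace h (k : F)) :
    f v ∈ Module.End.eigenspace h ((k - 2 : ℤ) : F) := by
  have := H.swap.mem_e (-k) v ((mem_neg _ _).2 (by simpa using hv))
  rw [mem_neg] at this
  convert this using 2
  push_cast; ring

theorem mem_e_pow (H : Sl2Rel h e f) (n : ℕ) (k : ℤ) (v : V)
    (hv : v ∈ Module.End.eigenspace h (k : F)) :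
    (e ^ n) v ∈ Module.End.eigenspace h ((k + 2 * n : ℤ) : F) := by
  induction n with
  | zero => simpa using hv
  | succ n ih =>
    rw [pow_succ', Module.End.mul_apply]
    have := H.mem_e _ _ ih
    convert this using 2
    push_cast; ring

theorem mem_f_pow (H : Sl2Rel h e f) (n : ℕ) (k : ℤ) (v : V)
    (hv : v ∈ Module.End.eigenspace h (k : F)) :
    (f ^ n) v ∈ Module.End.eigenspace h ((k - 2 * n : ℤ) : F) := by
  induction n with
  | zero => simpa using hv
  | succ n ih =>
    rw [pow_succ', Module.End.mul_apply]
    have := H.mem_f _ _ ih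
    convert this using 2
    push_cast; ring

/-- the Casimir operator -/
def cas (h e f : Module.End F V) : Module.End F V := 4 * (e * f) + (h - 1) ^ 2

theorem cas_swap (H : Sl2Rel h e f) : cas (-h) f e = cas h e f := by
  have := H.ef
  unfold cas
  rw [this]
  noncomm_ring

theorem cas_f (H : Sl2Rel h e f) : Commute (cas h e f) f := by
  have h1 := H.ef
  have h2 := H.hf
  have h3 : e * f * f = f * e * f + h * f := by rw [h1]; noncomm_ring
  have h4 : h * h * f = f * h * h - 4 * f * h + 4 * f := by
    rw [mul_assoc, h2, mul_sub, ← mul_assoc, h2,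
      show h * (2 * f) = 2 * (h * f) by noncomm_ring, h2]; noncomm_ring
  unfold Commute SemiconjBy cas
  have e1 : (4 * (e * f) + (h - 1) ^ 2) * f = 4 * (e * f * f) + h * h * f - 2 * (h * f) + f := by
    noncomm_ring
  rw [e1, h3, h4, h2]
  noncomm_ring

theorem cas_e (H : Sl2Rel h e f) : Commute (cas h e f) e := by
  rw [← H.cas_swap]; exact H.swap.cas_f

theorem cas_h (H : Sl2Rel h e f) : Commute (cas h e f) h := by
  have : h = e * f - f * e := by rw [H.ef]; abel
  have h2 : Commute (cas h e f) (e * f - f * e) :=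
    (H.cas_e.mul_right H.cas_f).sub_right (H.cas_f.mul_right H.cas_e)
  rwa [← this] at h2

open Polynomial

theorem mem_aeval_cas (H : Sl2Rel h e f) (p : F[X]) (k : F) (v : V)
    (hv : v ∈ Module.End.eigenspace h k) : aeval (cas h e f) p v ∈ Module.End.eigenspace h k := by
  rw [Module.End.mem_eigenspace_iff] at *
  have hc : Commute (aeval (cas h e f) p) h := by
    refine Algebra.commute_of_mem_adjoin_singleton_of_commute (R := F) ?_ H.cas_h.symm |>.symm
    exact aeval_mem_adjoin_singleton F _
  have := LinearMap.congr_fun hc v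
  simp only [Module.End.mul_apply, hv, map_smul] at this
  exact this.symm

noncomputable def pol (F : Type*) [Field F] (m : ℤ) (r : ℕ) : F[X] :=
  ∏ j ∈ Finset.range r, (X - C ((((m - 2 * j - 1) ^ 2 : ℤ)) : F))

theorem four_e_f (m : ℤ) (v : V) (hv : v ∈ Module.End.eigenspace h (m : F)) :
    (4 : F) • e (f v) = aeval (cas h e f) (X - C ((((m - 1) ^ 2 : ℤ)) : F)) v := by
  rw [Module.End.mem_eigenspace_iff] at hv
  have e4 : (4 : Module.End F V) (e (f v)) = (4 : F) • e (f v) := by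
    rw [← Nat.cast_ofNat, Module.End.natCast_apply, ← Nat.cast_smul_eq_nsmul F]; norm_num
  simp only [map_sub, aeval_X, aeval_C, cas, LinearMap.sub_apply, LinearMap.add_apply,
    Module.End.mul_apply, Module.algebraMap_end_apply, e4, pow_two, hv, Module.End.one_apply,
    map_smul]
  push_cast
  module

theorem e_pow_f_pow (H : Sl2Rel h e f) (m : ℤ) (r : ℕ) :
    ∀ v ∈ Module.End.eigenspace h (m : F),
    (4 ^ r : F) • (e ^ r) ((f ^ r) v) = aeval (cas h e f) (pol F m r) v := by
  induction r with
  | zero => intro v hv; simp [pol]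
  | succ r ih =>
    intro v hv
    have h1 := H.mem_f_pow r m v hv
    have h2 := four_e_f (e := e) (f := f) _ _ h1
    set q : F[X] := X - C ((((m - 2 * r - 1) ^ 2 : ℤ)) : F) with hq
    have hcomm : Commute (aeval (cas h e f) q) (f ^ r) := by
      refine (Algebra.commute_of_mem_adjoin_singleton_of_commute (R := F) ?_
        (H.cas_f.pow_right r).symm).symm
      exact aeval_mem_adjoin_singleton F _
    have h3 : aeval (cas h e f) q ((f ^ r) v) = (f ^ r) (aeval (cas h e f) q v) :=
      LinearMap.congr_fun hcomm v
    have h4 := ih _ (H.mem_aeval_cas q _ v hv)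
    have e0 : pol F m (r + 1) = pol F m r * q := by
      simp only [pol, Finset.prod_range_succ, hq]
    rw [e0, map_mul, Module.End.mul_apply, ← h4, ← h3, ← h2, pow_succ e, pow_succ' f, pow_succ,
      mul_smul, Module.End.mul_apply, Module.End.mul_apply, map_smul]

theorem key [CharZero F] (H : Sl2Rel h e f) (α r : ℕ)
    (hr : ∀ v ∈ Module.End.eigenspace h ((α : ℤ) : F), (e ^ r) v = 0) :
    ∀ v ∈ Module.End.eigenspace h ((α : ℤ) : F),
    ((f ^ α) v = 0 → v = 0) ∧
    ∃ u ∈ Module.End.eigenspace h ((α : ℤ) : F), v = (e ^ α) ((f ^ α) u) := by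
  intro v hv
  have hcop : IsCoprime (pol F α α) (pol F (-α) r) := by
    unfold pol
    refine IsCoprime.prod_left fun i hi => IsCoprime.prod_right fun j hj => ?_
    apply isCoprime_X_sub_C_of_isUnit_sub
    rw [isUnit_iff_ne_zero, sub_ne_zero]
    intro hh
    have hh := Int.cast_injective hh
    have hi := Finset.mem_range.1 hi
    have := sq_eq_sq_iff_eq_or_eq_neg.1 hh
    omega
  have hq : aeval (cas h e f) (pol F (-α) r) v = 0 := by
    have := H.swap.e_pow_f_pow (-α) r v ((mem_neg _ _).2 (by simpa using hv))
    rw [H.cas_swap] at this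
    rw [← this, hr v hv]; simp
  obtain ⟨a, b, hab⟩ := hcop
  have hab' := congrArg (fun p => aeval (cas h e f) p v) hab
  simp only [map_add, map_mul, map_one, LinearMap.add_apply, Module.End.mul_apply, hq, map_zero,
    add_zero, Module.End.one_apply] at hab'
  constructor
  · intro h0
    have := H.e_pow_f_pow α α v hv
    rw [h0] at this
    rw [← this] at hab'
    simpa using hab'.symm
  · refine ⟨(4 ^ α : F) • aeval (cas h e f) a v, Submodule.smul_mem _ _ (H.mem_aeval_cas a _ v hv), ?_⟩
    rw [map_smul, map_smul, H.e_pow_f_pow α α _ (H.mem_aeval_cas a _ v hv)]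
    rw [← Module.End.mul_apply, ← map_mul, mul_comm, map_mul, Module.End.mul_apply, hab']

end Sl2Rel

theorem Sl2Rel.wf {F V : Type*} [Field F] [CharZero F] [AddCommGroup V] [Module F V]
    [FiniteDimensional F V] {h e f : Module.End F V}
    (H : Sl2Rel h e f) (w : ℤ) (A : ℤ → Submodule F V)
    (hA : ∀ k : ℤ, A k ≤ Module.End.eigenspace h (k : F)) (hs : ⨆ k, A k = ⊤) :
    IsWeightFiltration f w (fun i => ⨆ k : ℤ, ⨆ _ : k ≤ i - w, A k) := by
  have hind : iSupIndep (fun k : ℤ => Module.End.eigenspace h (k : F)) :=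
    (Module.End.eigenspaces_iSupIndep h).comp Int.cast_injective
  have hAE : A = fun k : ℤ => Module.End.eigenspace h (k : F) := by
    funext k
    refine le_antisymm (hA k) ?_
    intro x hx
    have hx2 : x ∈ A k ⊔ ⨆ j, ⨆ _ : j ≠ k, A j := by
      have : (⊤ : Submodule F V) ≤ A k ⊔ ⨆ j, ⨆ _ : j ≠ k, A j := by
        rw [← hs]
        refine iSup_le fun j => ?_
        by_cases hj : j = k
        · subst hj; exact le_sup_left
        · exact le_sup_of_le_right (le_iSup₂_of_le j hj le_rfl)
      exact this trivial
    obtain ⟨a, ha, b, hb, rfl⟩ := Submodule.mem_sup.1 hx2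
    have hbE : b ∈ Module.End.eigenspace h (k : F) := by
      simpa using sub_mem hx (hA k ha)
    have hb0 : b = 0 := by
      refine (Submodule.disjoint_def.1 (hind k)) b hbE ?_
      exact iSup₂_mono (fun j _ => hA j) hb
    rw [hb0, add_zero]; exact ha
  set E : ℤ → Submodule F V := fun k : ℤ => Module.End.eigenspace h (k : F) with hE
  subst hAE
  have hfin : {k | E k ≠ ⊥}.Finite := WellFoundedGT.finite_ne_bot_of_iSupIndep hind
  obtain ⟨B, hB⟩ : ∃ B : ℕ, ∀ k : ℤ, (B : ℤ) ≤ |k| → E k = ⊥ := by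
    obtain ⟨B1, hB1⟩ := hfin.bddAbove
    obtain ⟨B2, hB2⟩ := hfin.bddBelow
    refine ⟨(max B1 (-B2)).toNat + 1, fun k hk => ?_⟩
    by_contra hne
    have h1 := hB1 hne
    have h2 := hB2 hne
    rcases abs_cases k with ⟨h3, _⟩ | ⟨h3, _⟩ <;> push_cast at hk <;> omega
  set Fil : ℤ → Submodule F V := fun i => ⨆ k : ℤ, ⨆ _ : k ≤ i, E k with hFil
  have mono : Monotone Fil := fun i j hij =>
    iSup_mono fun k => iSup_mono' fun hk => ⟨hk.trans hij, le_rfl⟩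
  have EF : ∀ i j, i ≤ j → E i ≤ Fil j := fun i j hij => le_iSup₂_of_le i hij le_rfl
  have step : ∀ i, Fil i ≤ E i ⊔ Fil (i - 1) := by
    intro i
    refine iSup₂_le fun k hk => ?_
    rcases eq_or_lt_of_le hk with h1 | h1
    · subst h1; exact le_sup_left
    · exact le_sup_of_le_right (EF _ _ (by omega))
  have nF : ∀ i : ℤ, (Fil i).map f ≤ Fil (i - 2) := by
    intro i
    simp only [hFil, Submodule.map_iSup]
    refine iSup₂_le fun k hk => ?_
    rintro _ ⟨v, hv, rfl⟩
    exact EF (k - 2) _ (by omega) (H.mem_f k v hv)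
  have nE : ∀ (α : ℕ) v, v ∈ E α → (f ^ α) v ∈ E (-α) := by
    intro α v hv
    have := H.mem_f_pow α α v hv
    rw [show ((α : ℤ) - 2 * α) = -α by ring] at this
    exact this
  have inj : ∀ (α : ℕ) v, v ∈ E α → (f ^ α) v = 0 → v = 0 := by
    intro α v hv
    refine (H.key α B (fun u hu => ?_) v hv).1
    have := H.mem_e_pow B α u hu
    have h0 := hB (α + 2 * B) (by rw [abs_of_nonneg (by positivity)]; omega)
    simp only [hE] at h0
    rw [h0] at this
    simpa using this
  have surj : ∀ (α : ℕ) v, v ∈ E (-α) → ∃ u ∈ E α, (f ^ α) u = v := by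
    intro α v hv
    obtain ⟨u, hu, huv⟩ := (H.swap.key α B (fun u hu => by
      rw [Sl2Rel.mem_neg] at hu
      have := H.mem_f_pow B (-α) u hu
      have h0 := hB (-α - 2 * B) (by rw [abs_of_nonpos (by omega)]; omega)
      simp only [hE] at h0
      rw [h0] at this
      simpa using this) v ((Sl2Rel.mem_neg _ _).2 hv)).2
    refine ⟨(e ^ α) u, ?_, huv.symm⟩
    have := H.mem_e_pow α _ u ((Sl2Rel.mem_neg _ _).1 hu)
    rw [show (-(α : ℤ) + 2 * α) = α by ring] at this
    exact this
  refine ⟨fun i j hij => mono (by omega), ⟨w - B, fun i hi => ?_⟩, ⟨w + B, fun i hi => ?_⟩,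
    fun i => ?_, ?_⟩
  · rw [eq_bot_iff]
    refine iSup₂_le fun k hk => ?_
    rw [hB k (by rw [abs_of_nonpos (by omega)]; omega)]
  · rw [eq_top_iff, ← hs]
    refine iSup_le fun k => ?_
    by_cases hk : k ≤ i - w
    · exact EF k _ hk
    · rw [hB k (by rw [abs_of_nonneg (by omega)]; omega)]; exact bot_le
  · have := nF (i - w)
    rw [show i - w - 2 = i - 2 - w by ring] at this
    exact this
  · intro α hα
    obtain ⟨α, rfl⟩ := Int.eq_ofNat_of_zero_le hα.le
    change Fil (w - α - w) ≤ Fil (w - α - 1 - w) ⊔ (Fil (w + α - w)).map (f ^ α) ∧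
      ∀ v ∈ Fil (w + α - w), (f ^ α) v ∈ Fil (w - α - 1 - w) → v ∈ Fil (w + α - 1 - w)
    rw [show w - (α : ℤ) - w = -α by ring, show w - (α : ℤ) - 1 - w = -α - 1 by ring,
      show w + (α : ℤ) - w = α by ring, show w + (α : ℤ) - 1 - w = α - 1 by ring]
    constructor
    · refine (step _).trans (sup_le ?_ le_sup_left)
      intro v hv
      obtain ⟨u, hu, rfl⟩ := surj α v hv
      exact Submodule.mem_sup_right ⟨u, EF _ _ le_rfl hu, rfl⟩
    · intro v hv hfv
      obtain ⟨a, ha, b, hb, rfl⟩ := Submodule.mem_sup.1 (step _ hv)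
      have hfb := wf_mem_of_kernel nF α _ b hb
      rw [show (α : ℤ) - 1 - 2 * α = -α - 1 by ring] at hfb
      have hfa : (f ^ α) a ∈ Fil (-α - 1) := by
        rw [map_add] at hfv
        simpa using sub_mem hfv hfb
      have h0 : (f ^ α) a = 0 := by
        refine (Submodule.disjoint_def.1 (hind (-(α : ℤ)))) _ (nE α a ha) ?_
        have hle : Fil (-α - 1) ≤ ⨆ j, ⨆ _ : j ≠ -(α : ℤ), E j :=
          iSup₂_le fun k hk => le_iSup₂_of_le k (by omega) le_rfl
        exact hle hfa
      rw [inj α a ha h0, zero_add]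
      exact hb

set_option linter.unusedSimpArgs false

theorem end_two {F V : Type*} [Field F] [AddCommGroup V] [Module F V] (v : V) :
    (2 : Module.End F V) v = v + v := by
  rw [← one_add_one_eq_two]; rfl

/-- `f` is part of an `sl2`-triple with integral weights. -/
def HasSplit {F V : Type*} [Field F] [AddCommGroup V] [Module F V] (f : Module.End F V) : Prop :=
  ∃ h e : Module.End F V, Sl2Rel h e f ∧ ⨆ k : ℤ, Module.End.eigenspace h (k : F) = ⊤

theorem HasSplit.of_equiv {F V U : Type*} [Field F] [AddCommGroup V] [Module F V]
    [AddCommGroup U] [Module F U] {f : Module.End F V} {g : Module.End F U}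
    (φ : V ≃ₗ[F] U) (hφ : ∀ v, φ (f v) = g (φ v)) (H : HasSplit f) : HasSplit g := by
  obtain ⟨h, e, H, ht⟩ := H
  have hg : g = φ.conj f := by
    ext u
    simp [LinearEquiv.conj_apply, hφ]
  have hm : ∀ a b : Module.End F V, φ.conj (a * b) = φ.conj a * φ.conj b := fun a b =>
    LinearEquiv.conj_comp φ b a
  refine ⟨φ.conj h, φ.conj e, ⟨?_, ?_, ?_⟩, ?_⟩
  · rw [← hm, H.he, map_add, hm, two_mul, map_add, two_mul]
  · rw [hg, ← hm, H.hf, map_sub, hm, two_mul, map_add, two_mul]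
  · rw [hg, ← hm, H.ef, map_add, hm]
  · rw [eq_top_iff]
    have h1 : (⊤ : Submodule F U) = (⊤ : Submodule F V).map φ.toLinearMap := by
      rw [Submodule.map_top, LinearEquiv.range]
    rw [h1, ← ht, Submodule.map_iSup]
    refine iSup_mono fun k => ?_
    rintro _ ⟨v, hv, rfl⟩
    rw [SetLike.mem_coe, Module.End.mem_eigenspace_iff] at hv
    rw [Module.End.mem_eigenspace_iff]
    simp [LinearEquiv.conj_apply, hv]

open Polynomial in
theorem block_split (F : Type*) [Field F] (n : ℕ) :
    HasSplit (LinearMap.lsmul F[X] (F[X] ⧸ (F[X] ∙ (X ^ n : F[X]))) X |>.restrictScalars F) := by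
  let c : F[X] := C ((n : F) - 1)
  let h : Module.End F F[X] := LinearMap.mulLeft F c -
    2 • (LinearMap.mulLeft F X ∘ₗ derivative)
  let e : Module.End F F[X] := LinearMap.mulLeft F c ∘ₗ derivative -
    (LinearMap.mulLeft F X ∘ₗ derivative ∘ₗ derivative)
  let f : Module.End F F[X] := LinearMap.mulLeft F X
  have hh : ∀ p, h p = c * p - 2 * (X * derivative p) := fun p => by simp [h]
  have he : ∀ p, e p = c * derivative p - X * derivative (derivative p) := fun p => by simp [e]
  have hf : ∀ p, f p = X * p := fun p => by simp [f]
  have dc : derivative c = 0 := derivative_C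
  let I : Submodule F F[X] := (F[X] ∙ (X ^ n : F[X])).restrictScalars F
  have memI : ∀ p, p ∈ I ↔ ∃ q, p = X ^ n * q := by
    intro p
    simp only [I, Submodule.restrictScalars_mem, Submodule.mem_span_singleton, smul_eq_mul]
    exact ⟨fun ⟨a, ha⟩ => ⟨a, by rw [← ha, mul_comm]⟩, fun ⟨a, ha⟩ => ⟨a, by rw [ha, mul_comm]⟩⟩
  have Ih : I ≤ I.comap h := by
    intro p hp
    obtain ⟨q, rfl⟩ := (memI p).1 hp
    rw [Submodule.mem_comap, memI, hh]
    refine ⟨c * q - 2 * ((n : F[X]) * q + X * derivative q), ?_⟩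
    rcases n with _ | n
    · simp
    · simp [derivative_mul]; ring
  have If : I ≤ I.comap f := by
    intro p hp
    obtain ⟨q, rfl⟩ := (memI p).1 hp
    rw [Submodule.mem_comap, memI, hf]
    exact ⟨X * q, by ring⟩
  have Ie : I ≤ I.comap e := by
    intro p hp
    obtain ⟨q, rfl⟩ := (memI p).1 hp
    rw [Submodule.mem_comap, memI, he]
    refine ⟨c * derivative q - 2 * (n : F[X]) * derivative q - X * derivative (derivative q), ?_⟩
    rcases n with _ | _ | n
    · simp
    · simp [derivative_mul, c]; ring
    · simp [derivative_mul, c]; ring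
  have S : HasSplit (I.mapQ I f If) := by
    refine ⟨I.mapQ I h Ih, I.mapQ I e Ie, ⟨?_, ?_, ?_⟩, ?_⟩
    · refine LinearMap.ext fun x => ?_
      obtain ⟨p, rfl⟩ := Submodule.Quotient.mk_surjective _ x
      simp only [LinearMap.add_apply, Module.End.mul_apply, end_two, Submodule.mapQ_apply,
        ← Submodule.Quotient.mk_add, ← Submodule.Quotient.mk_sub]
      congr 1
      simp only [hh, he, hf, derivative_mul, derivative_X, derivative_one, derivative_zero, map_sub, map_add, dc,
        show derivative (2 : F[X]) = 0 from derivative_ofNat 2]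
      ring
    · refine LinearMap.ext fun x => ?_
      obtain ⟨p, rfl⟩ := Submodule.Quotient.mk_surjective _ x
      simp only [LinearMap.sub_apply, Module.End.mul_apply, end_two, Submodule.mapQ_apply,
        ← Submodule.Quotient.mk_add, ← Submodule.Quotient.mk_sub]
      congr 1
      simp only [hh, he, hf, derivative_mul, derivative_X, derivative_one, derivative_zero, map_sub, map_add, dc,
        show derivative (2 : F[X]) = 0 from derivative_ofNat 2]
      ring
    · refine LinearMap.ext fun x => ?_
      obtain ⟨p, rfl⟩ := Submodule.Quotient.mk_surjective _ x
      simp only [LinearMap.add_apply, Module.End.mul_apply, end_two, Submodule.mapQ_apply,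
        ← Submodule.Quotient.mk_add, ← Submodule.Quotient.mk_sub]
      congr 1
      simp only [hh, he, hf, derivative_mul, derivative_X, derivative_one, derivative_zero, map_sub, map_add, dc,
        show derivative (2 : F[X]) = 0 from derivative_ofNat 2]
      ring
    · rw [eq_top_iff]
      rintro x -
      obtain ⟨p, rfl⟩ := Submodule.Quotient.mk_surjective _ x
      induction p using Polynomial.induction_on' with
      | add p q hp hq => rw [Submodule.Quotient.mk_add]; exact add_mem hp hq
      | monomial j a =>
        apply Submodule.mem_iSup_of_mem ((n : ℤ) - 1 - 2 * j)
        rw [Module.End.mem_eigenspace_iff, Submodule.mapQ_apply, ← Submodule.Quotient.mk_smul]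
        congr 1
        rw [hh, ← C_mul_X_pow_eq_monomial, smul_eq_C_mul]
        rcases j with _ | j
        · simp [c]
        · simp [c, show (C (2 : F)) = 2 from rfl]; ring
  refine S.of_equiv (Submodule.Quotient.restrictScalarsEquiv F _) ?_
  intro v
  obtain ⟨p, rfl⟩ := Submodule.Quotient.mk_surjective _ v
  rw [Submodule.mapQ_apply, hf]
  rfl

theorem HasSplit.pi {F : Type*} [Field F] {d : ℕ} {B : Fin d → Type*}
    [∀ i, AddCommGroup (B i)] [∀ i, Module F (B i)] (f : ∀ i, Module.End F (B i))
    (S : ∀ i, HasSplit (f i)) (g : Module.End F (∀ i, B i)) (hg : ∀ x i, g x i = f i (x i)) :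
    HasSplit g := by
  choose h e H ht using S
  refine ⟨LinearMap.pi fun i => h i ∘ₗ LinearMap.proj i,
    LinearMap.pi fun i => e i ∘ₗ LinearMap.proj i, ⟨?_, ?_, ?_⟩, ?_⟩
  · refine LinearMap.ext fun x => funext fun i => ?_
    have := LinearMap.congr_fun (H i).he (x i)
    simpa [end_two] using this
  · refine LinearMap.ext fun x => funext fun i => ?_
    have := LinearMap.congr_fun (H i).hf (x i)
    simpa [end_two, hg] using this
  · refine LinearMap.ext fun x => funext fun i => ?_
    have := LinearMap.congr_fun (H i).ef (x i)
    simpa [hg] using this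
  · rw [eq_top_iff]
    rintro x -
    rw [← LinearMap.sum_single_apply B x]
    refine sum_mem fun i _ => ?_
    have hx : x i ∈ ⨆ k : ℤ, Module.End.eigenspace (h i) (k : F) := by rw [ht i]; trivial
    have h2 := Submodule.mem_map_of_mem (f := LinearMap.single F B i) hx
    rw [Submodule.map_iSup] at h2
    refine (iSup_mono (fun k => ?_) : (⨆ k : ℤ, Submodule.map (LinearMap.single F B i)
      (Module.End.eigenspace (h i) (k : F))) ≤ _) h2
    rintro _ ⟨v, hv, rfl⟩
    rw [SetLike.mem_coe, Module.End.mem_eigenspace_iff] at hv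
    rw [Module.End.mem_eigenspace_iff]
    funext j
    by_cases hj : j = i
    · subst hj; simp [hv]
    · simp [hj]

open Polynomial DirectSum in
theorem hasSplit_of_isNilpotent {F V : Type*} [Field F] [AddCommGroup V] [Module F V]
    [FiniteDimensional F V] (N : Module.End F V) (hN : IsNilpotent N) : HasSplit N := by
  obtain ⟨m, hm⟩ := hN
  have ht : Module.IsTorsion' (Module.AEval' N) (Submonoid.powers (X : F[X])) := by
    intro x
    refine ⟨⟨X ^ m, m, rfl⟩, ?_⟩
    obtain ⟨v, rfl⟩ := (Module.AEval'.of N).surjective x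
    change (X ^ m : F[X]) • Module.AEval'.of N v = 0
    rw [Module.AEval'.X_pow_smul_of, hm]
    simp
  obtain ⟨d, k, ⟨φ⟩⟩ := Module.torsion_by_prime_power_decomposition (irreducible_X) ht
  let ψ : Module.AEval' N ≃ₗ[F[X]] (∀ i : Fin d, F[X] ⧸ (F[X] ∙ (X ^ k i : F[X]))) :=
    φ.trans (DirectSum.linearEquivFunOnFintype F[X] (Fin d) _)
  let g : Module.End F (∀ i : Fin d, F[X] ⧸ (F[X] ∙ (X ^ k i : F[X]))) :=
    (LinearMap.lsmul F[X] (∀ i : Fin d, F[X] ⧸ (F[X] ∙ (X ^ k i : F[X]))) X).restrictScalars F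
  have S : HasSplit g := HasSplit.pi _ (fun i => block_split F (k i)) _ (fun x i => rfl)
  refine S.of_equiv (((Module.AEval'.of N).trans (ψ.restrictScalars F)).symm) ?_
  intro v
  rw [LinearEquiv.symm_apply_eq]
  obtain ⟨u, rfl⟩ := ((Module.AEval'.of N).trans (ψ.restrictScalars F)).surjective v
  rw [LinearEquiv.symm_apply_apply]
  simp only [LinearEquiv.trans_apply, ← Module.AEval'.X_smul_of]
  exact (map_smul ψ _ _).symm

theorem Sl2Rel.tensor {F V V' : Type*} [Field F] [AddCommGroup V] [Module F V]
    [AddCommGroup V'] [Module F V'] {h e f : Module.End F V} {h' e' f' : Module.End F V'}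
    (H : Sl2Rel h e f) (H' : Sl2Rel h' e' f') :
    Sl2Rel (V := V ⊗[F] V') (TensorProduct.map h 1 + TensorProduct.map 1 h')
      (TensorProduct.map e 1 + TensorProduct.map 1 e')
      (TensorProduct.map f 1 + TensorProduct.map 1 f') where
  he := by
    refine TensorProduct.ext' fun x y => ?_
    have h1 := LinearMap.congr_fun H.he x
    have h2 := LinearMap.congr_fun H'.he y
    simp only [Module.End.mul_apply, LinearMap.add_apply, end_two] at h1 h2
    simp only [Module.End.mul_apply, LinearMap.add_apply, end_two, TensorProduct.map_tmul,
      map_add, Module.End.one_apply, h1, h2, TensorProduct.add_tmul, TensorProduct.tmul_add]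
    abel
  hf := by
    refine TensorProduct.ext' fun x y => ?_
    have h1 := LinearMap.congr_fun H.hf x
    have h2 := LinearMap.congr_fun H'.hf y
    simp only [Module.End.mul_apply, LinearMap.sub_apply, end_two] at h1 h2
    simp only [Module.End.mul_apply, LinearMap.add_apply, LinearMap.sub_apply, end_two,
      TensorProduct.map_tmul, map_add, Module.End.one_apply, h1, h2, TensorProduct.add_tmul,
      TensorProduct.tmul_add, TensorProduct.sub_tmul, TensorProduct.tmul_sub]
    abel
  ef := by
    refine TensorProduct.ext' fun x y => ?_
    have h1 := LinearMap.congr_fun H.ef x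
    have h2 := LinearMap.congr_fun H'.ef y
    simp only [Module.End.mul_apply, LinearMap.add_apply] at h1 h2
    simp only [Module.End.mul_apply, LinearMap.add_apply, TensorProduct.map_tmul,
      map_add, Module.End.one_apply, h1, h2, TensorProduct.add_tmul, TensorProduct.tmul_add]
    abel

theorem wf_tensor {F V V' : Type*} [Field F] [CharZero F]
    [AddCommGroup V] [Module F V] [FiniteDimensional F V]
    [AddCommGroup V'] [Module F V'] [FiniteDimensional F V']
    {N : Module.End F V} {N' : Module.End F V'} (hN : IsNilpotent N) (hN' : IsNilpotent N')
    {w w' : ℤ} {W : ℤ → Submodule F V} {W' : ℤ → Submodule F V'}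
    (hW : IsWeightFiltration N w W) (hW' : IsWeightFiltration N' w' W') :
    IsWeightFiltration (V := V ⊗[F] V') (TensorProduct.map N 1 + TensorProduct.map 1 N') (w + w')
      (fun i : ℤ =>
        ⨆ j : ℤ, Submodule.map₂ (TensorProduct.mk F V V') (W j) (W' (i - j))) := by
  obtain ⟨h, e, H, ht⟩ := hasSplit_of_isNilpotent N hN
  obtain ⟨h', e', H', ht'⟩ := hasSplit_of_isNilpotent N' hN'
  have eW := wf_unique hW (H.wf w _ (fun _ => le_rfl) ht)
  have eW' := wf_unique hW' (H'.wf w' _ (fun _ => le_rfl) ht')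
  let A : ℤ → Submodule F (V ⊗[F] V') := fun k => ⨆ a : ℤ,
    Submodule.map₂ (TensorProduct.mk F V V') (Module.End.eigenspace h (a : F))
      (Module.End.eigenspace h' ((k - a : ℤ) : F))
  have key := (H.tensor H').wf (w + w') A ?_ ?_
  · convert key using 1
    funext i
    apply le_antisymm
    · rw [eW, eW']
      simp only [Submodule.map₂_iSup_left, Submodule.map₂_iSup_right]
      refine iSup_le fun j => iSup_le fun a => iSup_le fun ha => iSup_le fun b => iSup_le fun hb => ?_
      refine le_iSup₂_of_le (a + b) (by omega) (le_iSup_of_le b ?_)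
      rw [show a + b - b = a by ring]
    · refine iSup₂_le fun k hk => iSup_le fun a => le_iSup_of_le (a + w) ?_
      refine Submodule.map₂_le_map₂ ?_ ?_
      · rw [eW]
        exact le_iSup₂_of_le (f := fun (k : ℤ) (_ : k ≤ a + w - w) =>
          Module.End.eigenspace h (k : F)) a (by omega) le_rfl
      · rw [eW']
        exact le_iSup₂_of_le (f := fun (k : ℤ) (_ : k ≤ i - (a + w) - w') =>
          Module.End.eigenspace h' (k : F)) (k - a) (by omega) le_rfl
  · intro k
    refine iSup_le fun a => Submodule.map₂_le.2 fun x hx y hy => ?_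
    rw [Module.End.mem_eigenspace_iff] at *
    simp only [TensorProduct.mk_apply, LinearMap.add_apply, TensorProduct.map_tmul, hx, hy,
      Module.End.one_apply, TensorProduct.smul_tmul', TensorProduct.tmul_smul, ← add_smul]
    push_cast
    rw [← TensorProduct.add_tmul, ← add_smul, add_sub_cancel]
  · rw [eq_top_iff, ← TensorProduct.map₂_mk_top_top_eq_top, ← ht, ← ht']
    simp only [Submodule.map₂_iSup_left, Submodule.map₂_iSup_right]
    refine iSup_le fun a => iSup_le fun b => le_iSup_of_le (a + b) (le_iSup_of_le b ?_)
    rw [show a + b - b = a by ring]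

theorem tensor_semisimple {F V V' : Type*} [Field F] [CharZero F]
    [AddCommGroup V] [Module F V] [FiniteDimensional F V]
    [AddCommGroup V'] [Module F V'] [FiniteDimensional F V']
    {S : Module.End F V} {S' : Module.End F V'} (hS : S.IsSemisimple) (hS' : S'.IsSemisimple) :
    Module.End.IsSemisimple (M := V ⊗[F] V') (TensorProduct.map S S') := by
  have e1 : TensorProduct.map S S' = TensorProduct.map S 1 * TensorProduct.map 1 S' := by
    rw [← TensorProduct.map_mul, mul_one, one_mul]
  have hc : Commute (TensorProduct.map S (1 : Module.End F V'))
      (TensorProduct.map (1 : Module.End F V) S') := by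
    unfold Commute SemiconjBy
    rw [← TensorProduct.map_mul, ← TensorProduct.map_mul]; simp
  rw [e1]
  refine Module.End.IsSemisimple.mul_of_commute hc ?_ ?_
  · apply Module.End.isSemisimple_of_squarefree_aeval_eq_zero hS.minpoly_squarefree
    have := Polynomial.aeval_algHom_apply (Module.End.rTensorAlgHom F V V') S (minpoly F S)
    rw [minpoly.aeval, map_zero] at this
    exact this
  · apply Module.End.isSemisimple_of_squarefree_aeval_eq_zero hS'.minpoly_squarefree
    have := Polynomial.aeval_algHom_apply (Module.End.lTensorAlgHom F V' V) S' (minpoly F S')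
    rw [minpoly.aeval, map_zero] at this
    exact this

/-- Let `M`, `M'` be automorphisms of finite dimensional vector spaces `V`, `V'` over a
field of characteristic zero, with Jordan–Chevalley decompositions `M = Ms + Mn` and
`M' = Ms' + Mn'`, and let `W`, `W'` be the weight filtrations centered at `w`, `w'`
associated to `Mn`, `Mn'`. If `M ⊗ M' = T + P` is a Jordan–Chevalley decomposition of the
automorphism `M ⊗ M'` of `V ⊗ V'` (`T` semisimple, `P` nilpotent, commuting), then the
weight filtration on `V ⊗ V'` centered at `w + w'` associated to `P` is the tensor product
filtration `(W ⊗ W')_i = Σ_{i₁ + i₂ = i} W_{i₁} ⊗ W'_{i₂}`. -/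
theorem weightFiltration_tensor_jordanChevalley
    (F V V' : Type*) [Field F] [CharZero F]
    [AddCommGroup V] [Module F V] [FiniteDimensional F V]
    [AddCommGroup V'] [Module F V'] [FiniteDimensional F V']
    (M Ms Mn : V →ₗ[F] V) (hMbij : Function.Bijective M)
    (hM : M = Ms + Mn) (hMs : Module.End.IsSemisimple Ms) (hMn : IsNilpotent Mn)
    (hMc : Commute Ms Mn)
    (M' Ms' Mn' : V' →ₗ[F] V') (hM'bij : Function.Bijective M')
    (hM' : M' = Ms' + Mn') (hMs' : Module.End.IsSemisimple Ms') (hMn' : IsNilpotent Mn')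
    (hMc' : Commute Ms' Mn')
    (w w' : ℤ) (W : ℤ → Submodule F V) (W' : ℤ → Submodule F V')
    (hW : IsWeightFiltration Mn w W) (hW' : IsWeightFiltration Mn' w' W')
    (T P : V ⊗[F] V' →ₗ[F] V ⊗[F] V')
    (hTP : TensorProduct.map M M' = T + P)
    (hT : Module.End.IsSemisimple T) (hP : IsNilpotent P) (hTPc : Commute T P) :
    IsWeightFiltration P (w + w')
      (fun i : ℤ =>
        ⨆ j : ℤ, Submodule.map₂ (TensorProduct.mk F V V') (W j) (W' (i - j))) := by
  -- invertibility of the semisimple parts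
  have uM : IsUnit M := (Module.End.isUnit_iff M).2 hMbij
  have uM' : IsUnit M' := (Module.End.isUnit_iff M').2 hM'bij
  have uS : IsUnit Ms := by
    have e : Ms = M + -Mn := by rw [hM]; abel
    rw [e]
    refine hMn.neg.isUnit_add_left_of_commute uM ?_
    rw [hM]
    exact (hMc.symm.add_right (Commute.refl _)).neg_left
  have uS' : IsUnit Ms' := by
    have e : Ms' = M' + -Mn' := by rw [hM']; abel
    rw [e]
    refine hMn'.neg.isUnit_add_left_of_commute uM' ?_
    rw [hM']
    exact (hMc'.symm.add_right (Commute.refl _)).neg_left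
  obtain ⟨⟨Ms, Si, i1, i2⟩, rfl⟩ := uS
  obtain ⟨⟨Ms', Si', i1', i2'⟩, rfl⟩ := uS'
  simp only at *
  -- the normalised nilpotents
  have hcS : Commute Si Mn := by
    have : Si * (Ms * Mn) * Si = Si * (Mn * Ms) * Si := by rw [hMc.eq]
    have h1 : Si * (Ms * Mn) * Si = Mn * Si := by rw [← mul_assoc, i2, one_mul]
    have h2 : Si * (Mn * Ms) * Si = Si * Mn := by rw [mul_assoc, mul_assoc, i1, mul_one]
    exact (h1.symm.trans (this.trans h2)).symm
  have hcS' : Commute Si' Mn' := by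
    have : Si' * (Ms' * Mn') * Si' = Si' * (Mn' * Ms') * Si' := by rw [hMc'.eq]
    have h1 : Si' * (Ms' * Mn') * Si' = Mn' * Si' := by rw [← mul_assoc, i2', one_mul]
    have h2 : Si' * (Mn' * Ms') * Si' = Si' * Mn' := by rw [mul_assoc, mul_assoc, i1', mul_one]
    exact (h1.symm.trans (this.trans h2)).symm
  have hW1 := wf_unit_mul hW Si Ms i2 i1 hcS
  have hW1' := wf_unit_mul hW' Si' Ms' i2' i1' hcS'
  have n1 : IsNilpotent (Si * Mn) := hcS.isNilpotent_mul_left hMn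
  have n1' : IsNilpotent (Si' * Mn') := hcS'.isNilpotent_mul_left hMn'
  have c1 : Commute Ms (Si * Mn) := by
    have : Commute Ms Si := i1.trans i2.symm
    exact this.mul_right hMc
  have c1' : Commute Ms' (Si' * Mn') := by
    have : Commute Ms' Si' := i1'.trans i2'.symm
    exact this.mul_right hMc'
  have m1 : Ms * (Si * Mn) = Mn := by rw [← mul_assoc, i1, one_mul]
  have m1' : Ms' * (Si' * Mn') = Mn' := by rw [← mul_assoc, i1', one_mul]
  have hT := hT
  generalize Si * Mn = N1 at *
  generalize Si' * Mn' = N1' at *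
  have key := wf_tensor n1 n1' hW1 hW1'
  have key2 := wf_perturb (R := TensorProduct.map N1 N1') key (by
    intro i
    rw [Submodule.map_iSup]
    refine iSup_le fun j => ?_
    rw [Submodule.map_le_iff_le_comap]
    refine Submodule.map₂_le.2 fun x hx y hy => ?_
    rw [Submodule.mem_comap, TensorProduct.mk_apply, TensorProduct.map_tmul]
    refine Submodule.mem_iSup_of_mem (j - 2) ?_
    refine Submodule.apply_mem_map₂ _ (hW1.2.2.2.1 _ ⟨x, hx, rfl⟩) ?_
    exact hW1'.1 (by omega) (hW1'.2.2.2.1 _ ⟨y, hy, rfl⟩))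
  set Q : Module.End F (V ⊗[F] V') :=
    TensorProduct.map N1 1 + TensorProduct.map 1 N1' + TensorProduct.map N1 N1' with hQ
  have cc : ∀ (a b : Module.End F V) (a' b' : Module.End F V'), Commute a b → Commute a' b' →
      Commute (TensorProduct.map a a') (TensorProduct.map b b') := by
    intro a b a' b' h h'
    unfold Commute SemiconjBy
    rw [← TensorProduct.map_mul, ← TensorProduct.map_mul, h.eq, h'.eq]
  have cQ : Commute (TensorProduct.map Ms Ms') Q :=
    ((cc _ _ _ _ c1 (Commute.one_right _)).add_right (cc _ _ _ _ (Commute.one_right _) c1')).add_right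
      (cc _ _ _ _ c1 c1')
  have key3 := wf_unit_mul key2 (TensorProduct.map Ms Ms') (TensorProduct.map Si Si')
    (by rw [← TensorProduct.map_mul, i1, i1', TensorProduct.map_one])
    (by rw [← TensorProduct.map_mul, i2, i2', TensorProduct.map_one]) cQ
  have nilQ : IsNilpotent Q := by
    have p1 : IsNilpotent (TensorProduct.map N1 (1 : Module.End F V')) := by
      obtain ⟨k, hk⟩ := n1
      exact ⟨k, by rw [TensorProduct.map_pow, hk, TensorProduct.map_zero_left]⟩
    have p2 : IsNilpotent (TensorProduct.map (1 : Module.End F V) N1') := by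
      obtain ⟨k, hk⟩ := n1'
      exact ⟨k, by rw [TensorProduct.map_pow, hk, TensorProduct.map_zero_right]⟩
    have p3 : IsNilpotent (TensorProduct.map N1 N1') := by
      obtain ⟨k, hk⟩ := n1'
      exact ⟨k, by rw [TensorProduct.map_pow, hk, TensorProduct.map_zero_right]⟩
    have q1 := (cc N1 1 1 N1' (Commute.one_right _) (Commute.one_left _)).isNilpotent_add p1 p2
    exact Commute.isNilpotent_add ((cc _ _ _ _ (Commute.refl _) (Commute.one_left _)).add_left
      (cc _ _ _ _ (Commute.one_left _) (Commute.refl _))) q1 p3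
  have dec : TensorProduct.map Ms Ms' * Q + TensorProduct.map Ms Ms' = P + T := by
    rw [add_comm P T, ← hTP, hM, hM', hQ, mul_add, mul_add, ← TensorProduct.map_mul,
      ← TensorProduct.map_mul, ← TensorProduct.map_mul, m1, m1', mul_one, mul_one,
      TensorProduct.map_add_left, TensorProduct.map_add_right, TensorProduct.map_add_right]
    abel
  have hPeq := (Module.End.isNilpotent_isSemisimple_unique
    (cQ.isNilpotent_mul_left nilQ) (tensor_semisimple hMs hMs') hP hT
    ((Commute.refl _).mul_left cQ.symm) hTPc.symm dec).1
  rw [← hPeq]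
  exact key3
end
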